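/- arXiv:1805.03469 — 4 statements merged into one kernel-verified Lean document; each statement's English description precedes it below -/
import Mathlib

section
/- Let f(z) = ∑_{k=1}^∞ a_k z^{n_k} be analytic on 𝔻 where n_{k+1} ≥ λ n_k for some λ > 1 and all k. Then f ∈ BMOA if and only if ∑_{k=1}^∞ |a_k|² < ∞. -/
open MeasureTheory Complex Metric

/-- `f` belongs to `BMOA`: `f` is analytic on `𝔻` and
`sup_{a∈𝔻} ∫_𝔻 |f'(z)|² (1-|σ_a(z)|²) dA(z) < ∞`, where `σ_a(z) = (a-z)/(1-āz)`. -/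
def MemBMOA (f : ℂ → ℂ) : Prop :=
  DifferentiableOn ℂ f (Metric.ball 0 1) ∧
    ∃ C : ℝ, ∀ a ∈ Metric.ball (0 : ℂ) 1,
      (∫⁻ z in Metric.ball (0 : ℂ) 1,
          ENNReal.ofReal (‖deriv f z‖ ^ 2 *
            (1 - ‖(a - z) / (1 - (starRingEnd ℂ) a * z)‖ ^ 2))) ≤ ENNReal.ofReal C

lemma polar_ball (φ : ℂ → ENNReal) (hφ : Measurable φ) :
    ∫⁻ z in Metric.ball (0 : ℂ) 1, φ z =
      ∫⁻ r in Set.Ioo (0 : ℝ) 1, ENNReal.ofReal r *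
        ∫⁻ θ in Set.Ioo (-Real.pi) Real.pi, φ (circleMap 0 r θ) := by
  have hcm : Measurable fun p : ℝ × ℝ => circleMap 0 p.1 p.2 := by
    unfold circleMap; fun_prop
  rw [← lintegral_indicator measurableSet_ball, ← Complex.lintegral_comp_polarCoord_symm]
  have h1 : ∀ p ∈ polarCoord.target, ENNReal.ofReal p.1 • (Metric.ball (0 : ℂ) 1).indicator φ
      (Complex.polarCoord.symm p) = (Set.Ioo (0 : ℝ) 1 ×ˢ (Set.univ : Set ℝ)).indicator
        (fun p => ENNReal.ofReal p.1 * φ (circleMap 0 p.1 p.2)) p := by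
    rintro ⟨r, θ⟩ hp
    have hr : 0 < r := hp.1
    have e : Complex.polarCoord.symm (r, θ) = circleMap 0 r θ := by
      simp [circleMap, Complex.exp_mul_I]
    rw [e]
    by_cases h : r < 1
    · rw [Set.indicator_of_mem, Set.indicator_of_mem]
      · simp
      · simp [hr, h]
      · simp [abs_of_pos hr, h]
    · rw [Set.indicator_of_notMem, Set.indicator_of_notMem]
      · simp
      · simp [h]
      · simpa [abs_of_pos hr] using h
  have hms : MeasurableSet (polarCoord.target) := polarCoord.open_target.measurableSet
  rw [setLIntegral_congr_fun hms h1, setLIntegral_indicator (measurableSet_Ioo.prod .univ)]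
  have h2 : (Set.Ioo (0 : ℝ) 1 ×ˢ (Set.univ : Set ℝ)) ∩ polarCoord.target
      = Set.Ioo (0 : ℝ) 1 ×ˢ Set.Ioo (-Real.pi) Real.pi := by
    ext ⟨r, θ⟩; simp [polarCoord_target]; tauto
  rw [h2, Measure.volume_eq_prod, setLIntegral_prod]
  · refine lintegral_congr fun r => ?_
    dsimp only
    rw [lintegral_const_mul]
    exact hφ.comp (continuous_circleMap 0 r).measurable
  · exact ((ENNReal.measurable_ofReal.comp measurable_fst).mul (hφ.comp hcm)).aemeasurable

lemma orth (r : ℝ) (j m : ℕ) :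
    ∫ θ in (-Real.pi)..Real.pi, (circleMap 0 r θ) ^ j * (starRingEnd ℂ) (circleMap 0 r θ) ^ m
      = if j = m then (2 * Real.pi * r ^ (2 * m) : ℂ) else 0 := by
  have e : ∀ θ : ℝ, (circleMap 0 r θ) ^ j * (starRingEnd ℂ) (circleMap 0 r θ) ^ m =
      (r : ℂ) ^ (j + m) * Complex.exp ((((j : ℂ) - m) * I) * θ) := by
    intro θ
    simp only [circleMap, zero_add, map_mul, Complex.conj_ofReal, ← Complex.exp_conj,
      Complex.conj_I, mul_pow, ← Complex.exp_nat_mul]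
    rw [show ((j : ℂ) - m) * I * θ = (j : ℂ) * (θ * I) + (m : ℂ) * (θ * -I) by ring,
      Complex.exp_add, pow_add]
    ring
  simp_rw [e]
  rw [intervalIntegral.integral_const_mul]
  split_ifs with h
  · subst h
    simp
    ring
  · have hne : ((j : ℂ) - m) * I ≠ 0 :=
      mul_ne_zero (sub_ne_zero.2 (by exact_mod_cast h)) I_ne_zero
    rw [integral_exp_mul_complex hne]
    have : Complex.exp (((j : ℂ) - m) * I * (Real.pi : ℝ)) =
        Complex.exp (((j : ℂ) - m) * I * ((-Real.pi : ℝ) : ℂ)) := by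
      rw [Complex.exp_eq_exp_iff_exists_int]
      exact ⟨(j : ℤ) - m, by push_cast; ring⟩
    rw [this]; simp

lemma coef (c : ℕ → ℂ) (m : ℕ → ℕ) (hm : Function.Injective m) (F : ℝ → ℂ) (r : ℝ) (hr : 0 < r)
    (hs : Summable fun k => ‖c k‖ * r ^ m k)
    (hF : ∀ θ, HasSum (fun k => c k * (circleMap 0 r θ) ^ m k) (F θ)) (j : ℕ) :
    ∫ θ in (-Real.pi)..Real.pi,
      F θ * (starRingEnd ℂ) (circleMap 0 r θ) ^ m j
      = 2 * Real.pi * (c j * r ^ (2 * m j)) := by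
  have h := intervalIntegral.hasSum_integral_of_dominated_convergence
    (μ := volume) (a := -Real.pi) (b := Real.pi)
    (F := fun k θ => c k * (circleMap 0 r θ) ^ m k * (starRingEnd ℂ) (circleMap 0 r θ) ^ m j)
    (f := fun θ => F θ * (starRingEnd ℂ) (circleMap 0 r θ) ^ m j)
    (fun k _ => ‖c k‖ * r ^ m k * r ^ m j)
    (fun k => by
      apply Continuous.aestronglyMeasurable
      have := continuous_circleMap 0 r
      fun_prop)
    (fun k => by
      refine Filter.Eventually.of_forall fun θ _ => ?_
      simp [abs_of_pos hr])
    (Filter.Eventually.of_forall fun θ _ => hs.mul_right _)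
    (by simp)
    (Filter.Eventually.of_forall fun θ _ => (hF θ).mul_right _)
  refine h.unique ?_
  have e : ∀ k, ∫ θ in (-Real.pi)..Real.pi,
      c k * (circleMap 0 r θ) ^ m k * (starRingEnd ℂ) (circleMap 0 r θ) ^ m j =
      if k = j then 2 * Real.pi * (c j * r ^ (2 * m j)) else 0 := by
    intro k
    simp_rw [mul_assoc]
    rw [intervalIntegral.integral_const_mul, orth]
    by_cases h : k = j
    · subst h; simp; ring
    · simp [h, hm.ne h]
  simp_rw [e]
  exact hasSum_ite_eq j _

lemma bessel (c : ℕ → ℂ) (m : ℕ → ℕ) (hm : Function.Injective m) (F : ℝ → ℂ) (r : ℝ) (hr : 0 < r)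
    (hs : Summable fun k => ‖c k‖ * r ^ m k)
    (hF : ∀ θ, HasSum (fun k => c k * (circleMap 0 r θ) ^ m k) (F θ))
    (hc : Continuous fun θ => F θ) (N : ℕ) :
    2 * Real.pi * ∑ k ∈ Finset.range N, ‖c k‖ ^ 2 * r ^ (2 * m k) ≤
      ∫ θ in (-Real.pi)..Real.pi, ‖F θ‖ ^ 2 := by
  have hz := continuous_circleMap 0 r
  set T : ℝ → ℂ := fun θ => ∑ k ∈ Finset.range N, c k * (circleMap 0 r θ) ^ m k with hT
  have hTc : Continuous T := by fun_prop
  -- inner product of any such function with T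
  have key : ∀ (d : ℕ → ℂ) (G : ℝ → ℂ), (Continuous fun θ => G θ) →
      (Summable fun k => ‖d k‖ * r ^ m k) →
      (∀ θ, HasSum (fun k => d k * (circleMap 0 r θ) ^ m k) (G θ)) →
      (∀ k ∈ Finset.range N, d k = c k) →
      ∫ θ in (-Real.pi)..Real.pi, (G θ * (starRingEnd ℂ) (T θ)).re
        = 2 * Real.pi * ∑ k ∈ Finset.range N, ‖c k‖ ^ 2 * r ^ (2 * m k) := by
    intro d G hGc hds hG hdc
    have h1 : ∫ θ in (-Real.pi)..Real.pi,
        (G θ * (starRingEnd ℂ) (T θ)) =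
        ((2 * Real.pi * ∑ k ∈ Finset.range N, ‖c k‖ ^ 2 * r ^ (2 * m k) : ℝ) : ℂ) := by
      have e : ∀ θ, G θ * (starRingEnd ℂ) (T θ) =
          ∑ k ∈ Finset.range N, (starRingEnd ℂ) (c k) * (G θ *
            (starRingEnd ℂ) (circleMap 0 r θ) ^ m k) := by
        intro θ
        simp only [hT, map_sum, map_mul, map_pow, Finset.mul_sum]
        exact Finset.sum_congr rfl fun k _ => by ring
      simp_rw [e]
      rw [intervalIntegral.integral_finsetSum]
      · push_cast
        rw [Finset.mul_sum]
        refine Finset.sum_congr rfl fun k hk => ?_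
        rw [intervalIntegral.integral_const_mul, coef d m hm G r hr hds hG k, hdc k hk,
          ← Complex.conj_mul']
        ring
      · intro k _
        apply Continuous.intervalIntegrable
        fun_prop
    have h2 := congrArg Complex.re h1
    rw [Complex.ofReal_re] at h2
    rw [← h2]
    have := (Complex.reCLM).intervalIntegral_comp_comm (μ := volume) (a := -Real.pi) (b := Real.pi)
      (f := fun θ => G θ * (starRingEnd ℂ) (T θ))
      (by apply Continuous.intervalIntegrable; fun_prop)
    simpa using this
  have k1 := key c F hc hs hF (fun _ _ => rfl)
  have k2 := key (fun k => if k ∈ Finset.range N then c k else 0) T hTc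
    (by
      refine summable_of_ne_finset_zero (s := Finset.range N) fun k hk => ?_
      simp only [hk]; simp)
    (by
      intro θ
      have e : T θ = ∑ k ∈ Finset.range N,
          (if k ∈ Finset.range N then c k else 0) * (circleMap 0 r θ) ^ m k :=
        Finset.sum_congr rfl fun k hk => by rw [if_pos hk]
      rw [e]
      exact hasSum_sum_of_ne_finset_zero (fun k hk => by rw [if_neg hk, zero_mul]))
    (fun k hk => if_pos hk)
  set X := 2 * Real.pi * ∑ k ∈ Finset.range N, ‖c k‖ ^ 2 * r ^ (2 * m k)
  have : X = ∫ θ in (-Real.pi)..Real.pi,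
      (2 * (F θ * (starRingEnd ℂ) (T θ)).re -
        (T θ * (starRingEnd ℂ) (T θ)).re) := by
    rw [intervalIntegral.integral_sub, intervalIntegral.integral_const_mul, k1, k2]
    · ring
    · apply Continuous.intervalIntegrable; fun_prop
    · apply Continuous.intervalIntegrable; fun_prop
  rw [this]
  apply intervalIntegral.integral_mono_on (by linarith [Real.pi_pos])
  · apply Continuous.intervalIntegrable; fun_prop
  · apply Continuous.intervalIntegrable; fun_prop
  · intro θ _
    generalize F θ = u
    generalize T θ = v
    rw [← Complex.normSq_eq_norm_sq, Complex.normSq_apply]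
    simp
    nlinarith [sq_nonneg (u.re - v.re), sq_nonneg (u.im - v.im)]

lemma gap (r : ℝ) (h0 : 0 ≤ r) (h1 : r < 1) (m n : ℕ) (h : m ≤ n) :
    (1 - r) * ((n : ℝ) - m) * r ^ (n - 1) ≤ r ^ m - r ^ n := by
  induction n, h using Nat.le_induction with
  | base => simp
  | succ n hmn ih =>
    have e : r ^ n ≤ r ^ (n - 1) := pow_le_pow_of_le_one h0 h1.le (Nat.sub_le _ _)
    have hm : (0 : ℝ) ≤ (n : ℝ) - m := sub_nonneg.2 (by exact_mod_cast hmn)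
    have : (1 - r) * ((n : ℝ) - m) * r ^ n ≤ (1 - r) * ((n : ℝ) - m) * r ^ (n - 1) :=
      mul_le_mul_of_nonneg_left e (mul_nonneg (by linarith) hm)
    rw [Nat.add_sub_cancel]
    push_cast
    rw [pow_succ]
    linarith

lemma lac_sum (n : ℕ → ℕ) (lam : ℝ) (hlam : 1 < lam)
    (hlac : ∀ k, lam * (n k : ℝ) ≤ (n (k + 1) : ℝ)) (r : ℝ) (h0 : 0 ≤ r) (h1 : r < 1) (N : ℕ) :
    (1 - 1 / lam) * (1 - r) * ∑ k ∈ Finset.range N, (n k : ℝ) * r ^ (n k - 1) ≤ 1 := by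
  have hl : 0 < lam := by linarith
  have hl1 : 1 / lam < 1 := by rw [div_lt_one hl]; exact hlam
  have hl0 : 0 < 1 / lam := by positivity
  have key : ∀ N, (1 - 1 / lam) * (1 - r) * ∑ k ∈ Finset.range (N + 1), (n k : ℝ) * r ^ (n k - 1)
      ≤ 1 - r ^ n N := by
    intro N
    induction N with
    | zero =>
      have := gap r h0 h1 0 (n 0) (Nat.zero_le _)
      simp at this ⊢
      have h3 : 0 ≤ (1 - r) * (n 0 : ℝ) * r ^ (n 0 - 1) :=
        mul_nonneg (mul_nonneg (by linarith) (by positivity)) (by positivity)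
      rw [one_div] at hl0
      nlinarith
    | succ N ih =>
      rw [Finset.sum_range_succ, mul_add]
      have hle : (n N : ℝ) ≤ (1 / lam) * n (N + 1) := by
        rw [one_div, ← div_eq_inv_mul, le_div_iff₀ hl]; linarith [hlac N]
      have hmn : n N ≤ n (N + 1) := by
        have : (n N : ℝ) ≤ n (N + 1) := by
          refine hle.trans ?_
          have : (0 : ℝ) ≤ n (N + 1) := by positivity
          nlinarith
        exact_mod_cast this
      have := gap r h0 h1 _ _ hmn
      have h5 : (1 - 1 / lam) * (1 - r) * ((n (N + 1) : ℝ) * r ^ (n (N + 1) - 1)) ≤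
          (1 - r) * ((n (N + 1) : ℝ) - n N) * r ^ (n (N + 1) - 1) := by
        have hp : 0 ≤ (1 - r) * r ^ (n (N + 1) - 1) :=
          mul_nonneg (by linarith) (by positivity)
        have : (1 - 1 / lam) * n (N + 1) ≤ (n (N + 1) : ℝ) - n N := by linarith
        nlinarith [mul_le_mul_of_nonneg_left this hp]
      linarith
  cases N with
  | zero => simp
  | succ N => exact (key N).trans (by linarith [pow_nonneg h0 (n N)])

lemma ptwise (a : ℕ → ℂ) (n : ℕ → ℕ) (lam : ℝ) (hlam : 1 < lam)
    (hlac : ∀ k, lam * (n k : ℝ) ≤ (n (k + 1) : ℝ)) (z w : ℂ) (hz : ‖z‖ < 1)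
    (hw : HasSum (fun k => a k * (n k * z ^ (n k - 1))) w) :
    ENNReal.ofReal (‖w‖ ^ 2 * (1 - ‖z‖ ^ 2)) ≤
      ∑' k, ENNReal.ofReal (2 / (1 - 1 / lam) * (n k * ‖a k‖ ^ 2 * ‖z‖ ^ (n k - 1))) := by
  have hl : 0 < lam := by linarith
  have hl1 : 0 < 1 - 1 / lam := by
    have : 1 / lam < 1 := by rw [div_lt_one hl]; exact hlam
    linarith
  set r := ‖z‖
  have h0 : 0 ≤ r := norm_nonneg z
  have ht := hw.tendsto_sum_nat
  have ht2 := ENNReal.tendsto_ofReal ((ht.norm.pow 2).mul_const (1 - r ^ 2))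
  refine le_of_tendsto' ht2 fun N => ?_
  refine le_trans ?_ (ENNReal.sum_le_tsum (Finset.range N))
  rw [← ENNReal.ofReal_sum_of_nonneg (fun k _ => by positivity)]
  apply ENNReal.ofReal_le_ofReal
  rw [← Finset.mul_sum]
  have hn : ‖∑ k ∈ Finset.range N, a k * (n k * z ^ (n k - 1))‖ ≤
      ∑ k ∈ Finset.range N, ‖a k‖ * (n k * r ^ (n k - 1)) := by
    refine (norm_sum_le _ _).trans (le_of_eq (Finset.sum_congr rfl fun k _ => ?_))
    simp [r]
  have cs := Finset.sum_sq_le_sum_mul_sum_of_sq_le_mul (Finset.range N)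
    (r := fun k => ‖a k‖ * (n k * r ^ (n k - 1)))
    (f := fun k => n k * ‖a k‖ ^ 2 * r ^ (n k - 1)) (g := fun k => (n k : ℝ) * r ^ (n k - 1))
    (fun k _ => by positivity) (fun k _ => by positivity) (fun k _ => le_of_eq (by ring))
  have hs := lac_sum n lam hlam hlac r h0 hz N
  set S := ∑ k ∈ Finset.range N, (n k : ℝ) * r ^ (n k - 1)
  set Q := ∑ k ∈ Finset.range N, n k * ‖a k‖ ^ 2 * r ^ (n k - 1)
  have hQ : 0 ≤ Q := Finset.sum_nonneg fun k _ => by positivity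
  have hS : 0 ≤ S := Finset.sum_nonneg fun k _ => by positivity
  have h2 : ‖∑ k ∈ Finset.range N, a k * (n k * z ^ (n k - 1))‖ ^ 2 ≤ Q * S :=
    (pow_le_pow_left₀ (norm_nonneg _) hn 2).trans cs
  have h3 : (1 - r ^ 2) ≤ 2 * (1 - r) := by nlinarith [sq_nonneg (1 - r)]
  have h4 : 0 ≤ 1 - r ^ 2 := by nlinarith
  calc _ ≤ Q * S * (2 * (1 - r)) := mul_le_mul h2 h3 h4 (by positivity)
    _ = 2 / (1 - 1 / lam) * Q * ((1 - 1 / lam) * (1 - r) * S) := by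
        have := hl1.ne'
        generalize 1 - 1 / lam = x at this
        field_simp
    _ ≤ 2 / (1 - 1 / lam) * Q * 1 := mul_le_mul_of_nonneg_left hs (by positivity)
    _ = _ := mul_one _

lemma moebius (a z : ℂ) (ha : ‖a‖ < 1) (hz : ‖z‖ < 1) :
    1 - ‖(a - z) / (1 - (starRingEnd ℂ) a * z)‖ ^ 2 =
      (1 - ‖z‖ ^ 2) * ((1 - ‖a‖ ^ 2) / ‖1 - (starRingEnd ℂ) a * z‖ ^ 2) := by
  have hne : 1 - (starRingEnd ℂ) a * z ≠ 0 := by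
    intro h
    have : ‖(starRingEnd ℂ) a * z‖ = 1 := by rw [← sub_eq_zero.1 h]; simp
    rw [norm_mul, RCLike.norm_conj] at this
    nlinarith [norm_nonneg a, norm_nonneg z]
  have h2 : ‖1 - (starRingEnd ℂ) a * z‖ ^ 2 ≠ 0 := by positivity
  rw [norm_div, div_pow, mul_div_assoc', eq_div_iff h2, sub_mul, div_mul_cancel₀ _ h2]
  simp only [← Complex.normSq_eq_norm_sq, Complex.normSq_apply]
  simp
  ring

lemma poisson (a : ℂ) (ha : ‖a‖ < 1) (r : ℝ) (h0 : 0 < r) (h1 : r < 1) :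
    ∫⁻ θ in Set.Ioo (-Real.pi) Real.pi, ENNReal.ofReal
      ((1 - ‖a‖ ^ 2) / ‖1 - (starRingEnd ℂ) a * circleMap 0 r θ‖ ^ 2)
      ≤ ENNReal.ofReal (2 * Real.pi) := by
  have hne : ∀ z : ℂ, ‖z‖ ≤ r → 1 - (starRingEnd ℂ) a * z ≠ 0 := by
    intro z hz h
    have : ‖(starRingEnd ℂ) a * z‖ = 1 := by rw [← sub_eq_zero.1 h]; simp
    rw [norm_mul, RCLike.norm_conj] at this
    nlinarith [norm_nonneg a, norm_nonneg z]
  have hnorm : ∀ θ, ‖circleMap 0 r θ‖ = r := fun θ => by simp [abs_of_pos h0]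
  set h : ℂ → ℂ := fun z => (1 + (starRingEnd ℂ) a * z) / (1 - (starRingEnd ℂ) a * z) with hh
  have hd : DiffContOnCl ℂ h (ball 0 |r|) := by
    apply DifferentiableOn.diffContOnCl
    rw [abs_of_pos h0, closure_ball _ h0.ne']
    intro z hz
    have := hne z (by simpa using hz)
    apply DifferentiableAt.differentiableWithinAt
    exact DifferentiableAt.fun_div (by fun_prop) (by fun_prop) this
  have hav := hd.circleAverage
  have hcz := continuous_circleMap 0 r
  have hcont : Continuous fun θ => h (circleMap 0 r θ) := by
    apply Continuous.div _ _ (fun θ => hne _ (hnorm θ).le) <;> fun_prop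
  rw [Real.circleAverage_def] at hav
  have hper : Function.Periodic (fun θ => h (circleMap 0 r θ)) (2 * Real.pi) :=
    (periodic_circleMap 0 r).comp h
  have hint : ∫ θ in (-Real.pi)..Real.pi, h (circleMap 0 r θ) = ((2 * Real.pi : ℝ) : ℂ) := by
    have e := hper.intervalIntegral_add_eq (-Real.pi) 0
    rw [show -Real.pi + 2 * Real.pi = Real.pi by ring, zero_add] at e
    rw [e]
    have : h 0 = 1 := by simp [hh]
    rw [this] at hav
    have hp : (2 * Real.pi) ≠ 0 := by positivity
    have := congrArg (fun x => (2 * Real.pi) • x) hav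
    simp only [smul_inv_smul₀ hp] at this
    rw [this]; simp
  have hre : ∫ θ in (-Real.pi)..Real.pi, (h (circleMap 0 r θ)).re = 2 * Real.pi := by
    have := (Complex.reCLM).intervalIntegral_comp_comm (μ := volume) (a := -Real.pi) (b := Real.pi)
      (f := fun θ => h (circleMap 0 r θ)) (hcont.intervalIntegrable _ _)
    rw [hint] at this
    simpa using this
  have hid : ∀ θ, (h (circleMap 0 r θ)).re =
      (1 - ‖a‖ ^ 2 * r ^ 2) / ‖1 - (starRingEnd ℂ) a * circleMap 0 r θ‖ ^ 2 := by
    intro θ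
    suffices H : ∀ z, (h z).re = (1 - ‖a‖ ^ 2 * ‖z‖ ^ 2) / ‖1 - (starRingEnd ℂ) a * z‖ ^ 2 by
      rw [H, hnorm]
    intro z
    simp only [hh, Complex.div_re, ← Complex.normSq_eq_norm_sq, ← add_div]
    congr 1
    simp only [Complex.normSq_apply]
    simp
    ring
  have har : ‖a‖ ^ 2 * r ^ 2 ≤ ‖a‖ ^ 2 := by
    have : r ^ 2 ≤ 1 := by nlinarith
    nlinarith [sq_nonneg ‖a‖]
  have ha2 : ‖a‖ ^ 2 < 1 := by nlinarith [norm_nonneg a]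
  have hpos : ∀ θ, 0 ≤ (h (circleMap 0 r θ)).re := fun θ => by
    rw [hid]; exact div_nonneg (by linarith) (by positivity)
  rw [← hre, intervalIntegral.integral_of_le (by linarith [Real.pi_pos]),
    integral_Ioc_eq_integral_Ioo, ofReal_integral_eq_lintegral_ofReal]
  · refine lintegral_mono fun θ => ENNReal.ofReal_le_ofReal ?_
    rw [hid]
    gcongr
  · have : Continuous fun θ => (h (circleMap 0 r θ)).re := Complex.continuous_re.comp hcont
    exact (this.integrableOn_Icc (a := -Real.pi) (b := Real.pi)).mono_set Set.Ioo_subset_Icc_self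
  · exact Filter.Eventually.of_forall hpos

lemma lint_pow (m : ℕ) : ∫⁻ r in Set.Ioo (0 : ℝ) 1, ENNReal.ofReal (r ^ m) =
    ENNReal.ofReal (1 / (m + 1)) := by
  rw [← ofReal_integral_eq_lintegral_ofReal, ← integral_Ioc_eq_integral_Ioo,
    ← intervalIntegral.integral_of_le zero_le_one, integral_pow]
  · simp
  · exact ((continuous_pow m).integrableOn_Icc (a := 0) (b := 1)).mono_set Set.Ioo_subset_Icc_self
  · refine (ae_restrict_iff' measurableSet_Ioo).2 (Filter.Eventually.of_forall fun r hr => ?_)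
    exact pow_nonneg hr.1.le m

lemma deriv_facts (a : ℕ → ℂ) (n : ℕ → ℕ) (f : ℂ → ℂ)
    (hf : ∀ z ∈ Metric.ball (0 : ℂ) 1, HasSum (fun k => a k * z ^ n k) (f z)) :
    DifferentiableOn ℂ f (ball 0 1) ∧ ∀ z ∈ ball (0 : ℂ) 1,
      HasSum (fun k => a k * (n k * z ^ (n k - 1))) (deriv f z) := by
  have main : ∀ z ∈ ball (0 : ℂ) 1, DifferentiableAt ℂ f z ∧
      HasSum (fun k => a k * (n k * z ^ (n k - 1))) (deriv f z) := by
    intro z hz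
    rw [mem_ball_zero_iff] at hz
    obtain ⟨R, hzR, hR⟩ := exists_between hz
    have hR0 : 0 < R := (norm_nonneg z).trans_lt hzR
    have hu : Summable fun k => ‖a k‖ * R ^ n k := by
      have := (hf (R : ℂ) (by simp [abs_of_pos hR0, hR])).summable.norm
      simpa [abs_of_pos hR0] using this
    have hdf : ∀ i, DifferentiableOn ℂ (fun z => a i * z ^ n i) (ball 0 R) := fun i => by fun_prop
    have hle : ∀ i w, w ∈ ball (0 : ℂ) R → ‖a i * w ^ n i‖ ≤ ‖a i‖ * R ^ n i := by
      intro i w hw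
      rw [mem_ball_zero_iff] at hw
      rw [norm_mul, norm_pow]
      gcongr
    have hzU : z ∈ ball (0 : ℂ) R := by simpa using hzR
    have d1 := differentiableOn_tsum_of_summable_norm hu hdf isOpen_ball hle
    have d2 := hasSum_deriv_of_summable_norm hu hdf isOpen_ball hle hzU
    have heq : f =ᶠ[nhds z] fun w => ∑' i, a i * w ^ n i := by
      filter_upwards [isOpen_ball.mem_nhds hzU] with w hw
      rw [mem_ball_zero_iff] at hw
      exact (hf w (by simpa using hw.trans hR)).tsum_eq.symm
    refine ⟨((d1.differentiableAt (isOpen_ball.mem_nhds hzU)).congr_of_eventuallyEq heq), ?_⟩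
    rw [heq.deriv_eq]
    simpa using d2
  exact ⟨fun z hz => (main z hz).1.differentiableWithinAt, fun z hz => (main z hz).2⟩

lemma term_bound (a : ℂ) (ha : ‖a‖ < 1) (m : ℕ) :
    ∫⁻ z in Metric.ball (0 : ℂ) 1, ENNReal.ofReal (‖z‖ ^ m) *
      ENNReal.ofReal ((1 - ‖a‖ ^ 2) / ‖1 - (starRingEnd ℂ) a * z‖ ^ 2)
      ≤ ENNReal.ofReal (2 * Real.pi / (m + 1)) := by
  rw [polar_ball _ (by fun_prop)]
  calc _ ≤ ∫⁻ r in Set.Ioo (0 : ℝ) 1, ENNReal.ofReal (r ^ m) * ENNReal.ofReal (2 * Real.pi) := by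
        refine setLIntegral_mono' measurableSet_Ioo fun r hr => ?_
        have e : ∀ θ, ‖circleMap 0 r θ‖ = r := fun θ => by simp [abs_of_pos hr.1]
        simp_rw [e]
        rw [lintegral_const_mul' _ _ ENNReal.ofReal_ne_top]
        calc _ ≤ 1 * (ENNReal.ofReal (r ^ m) * ENNReal.ofReal (2 * Real.pi)) := by
              gcongr
              · exact ENNReal.ofReal_le_one.2 hr.2.le
              · exact poisson a ha r hr.1 hr.2
          _ = _ := one_mul _
    _ = _ := by
        rw [lintegral_mul_const' _ _ ENNReal.ofReal_ne_top, lint_pow, ← ENNReal.ofReal_mul (by positivity)]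
        congr 1
        ring

lemma backward (a : ℕ → ℂ) (n : ℕ → ℕ) (lam : ℝ) (hlam : 1 < lam)
    (hpos : ∀ k, 0 < n k)
    (hlac : ∀ k, lam * (n k : ℝ) ≤ (n (k + 1) : ℝ)) (F : ℂ → ℂ)
    (hF : ∀ z ∈ ball (0 : ℂ) 1, HasSum (fun k => a k * (n k * z ^ (n k - 1))) (F z))
    (hs : Summable (fun k => ‖a k‖ ^ 2)) (b : ℂ) (hb : ‖b‖ < 1) :
    (∫⁻ z in Metric.ball (0 : ℂ) 1,
          ENNReal.ofReal (‖F z‖ ^ 2 *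
            (1 - ‖(b - z) / (1 - (starRingEnd ℂ) b * z)‖ ^ 2))) ≤
      ENNReal.ofReal (∑' k, 2 / (1 - 1 / lam) * (2 * Real.pi) * ‖a k‖ ^ 2) := by
  have hl : 0 < lam := by linarith
  have hl1 : 0 < 1 - 1 / lam := by
    have : 1 / lam < 1 := by rw [div_lt_one hl]; exact hlam
    linarith
  set K := 2 / (1 - 1 / lam) with hK
  have hK0 : 0 < K := by positivity
  calc _ ≤ ∫⁻ z in Metric.ball (0 : ℂ) 1, ∑' k, ENNReal.ofReal (K * n k * ‖a k‖ ^ 2) *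
        (ENNReal.ofReal (‖z‖ ^ (n k - 1)) *
          ENNReal.ofReal ((1 - ‖b‖ ^ 2) / ‖1 - (starRingEnd ℂ) b * z‖ ^ 2)) := by
        refine setLIntegral_mono' measurableSet_ball fun z hz => ?_
        have hz1 : ‖z‖ < 1 := by simpa using hz
        rw [moebius b z hb hz1, ← mul_assoc, ENNReal.ofReal_mul
          (mul_nonneg (by positivity) (by nlinarith [norm_nonneg z]))]
        refine (mul_le_mul_left (ptwise a n lam hlam hlac z _ hz1 (hF z hz)) _).trans ?_
        rw [← ENNReal.tsum_mul_right]
        refine ENNReal.tsum_le_tsum fun k => le_of_eq ?_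
        have e : 2 / (1 - 1 / lam) * (n k * ‖a k‖ ^ 2 * ‖z‖ ^ (n k - 1)) =
            (K * n k * ‖a k‖ ^ 2) * ‖z‖ ^ (n k - 1) := by rw [hK]; ring
        rw [e, ENNReal.ofReal_mul (by positivity), mul_assoc]
    _ = ∑' k, ENNReal.ofReal (K * n k * ‖a k‖ ^ 2) * ∫⁻ z in Metric.ball (0 : ℂ) 1,
        (ENNReal.ofReal (‖z‖ ^ (n k - 1)) *
          ENNReal.ofReal ((1 - ‖b‖ ^ 2) / ‖1 - (starRingEnd ℂ) b * z‖ ^ 2)) := by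
        rw [lintegral_tsum]
        · exact tsum_congr fun k => lintegral_const_mul' _ _ ENNReal.ofReal_ne_top
        · intro k
          apply Measurable.aemeasurable
          fun_prop
    _ ≤ ∑' k, ENNReal.ofReal (K * (2 * Real.pi) * ‖a k‖ ^ 2) := by
        refine ENNReal.tsum_le_tsum fun k => ?_
        refine (mul_le_mul_right (term_bound b hb (n k - 1)) _).trans (le_of_eq ?_)
        rw [← ENNReal.ofReal_mul (by positivity), Nat.cast_sub (hpos k)]
        congr 1
        have : (n k : ℝ) ≠ 0 := by exact_mod_cast (hpos k).ne'
        push_cast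
        rw [sub_add_cancel]
        field_simp
    _ = _ := by
        rw [ENNReal.ofReal_tsum_of_nonneg (fun k => by positivity) (hs.mul_left _)]

lemma rad_int (n : ℕ) (hn : 0 < n) :
    ∫ r in (0 : ℝ)..1, r * (1 - r ^ 2) * r ^ (2 * (n - 1)) = 1 / (2 * (n : ℝ) * ((n : ℝ) + 1)) := by
  obtain ⟨m, rfl⟩ : ∃ m, n = m + 1 := ⟨n - 1, by omega⟩
  have e : ∀ r : ℝ, r * (1 - r ^ 2) * r ^ (2 * (m + 1 - 1)) = r ^ (2 * m + 1) - r ^ (2 * m + 3) := by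
    intro r; simp; ring
  simp_rw [e]
  rw [intervalIntegral.integral_sub (by simp) (by simp), integral_pow, integral_pow]
  push_cast
  simp
  field_simp
  ring

lemma forward (a : ℕ → ℂ) (n : ℕ → ℕ) (hinj : Function.Injective n)
    (hpos : ∀ k, 0 < n k) (F : ℂ → ℂ) (hFm : Measurable F) (hFc : ContinuousOn F (ball 0 1))
    (hF : ∀ z ∈ ball (0 : ℂ) 1, HasSum (fun k => a k * (n k * z ^ (n k - 1))) (F z))
    (C : ℝ) (hC : (∫⁻ z in Metric.ball (0 : ℂ) 1,
          ENNReal.ofReal (‖F z‖ ^ 2 * (1 - ‖z‖ ^ 2))) ≤ ENNReal.ofReal C) :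
    Summable (fun k => ‖a k‖ ^ 2) := by
  rw [polar_ball _ (by fun_prop)] at hC
  have hinj' : Function.Injective fun k => n k - 1 := by
    intro i j h
    apply hinj
    have := hpos i; have := hpos j
    simp only at h; omega
  have hbd : ∀ N, ENNReal.ofReal (2 * Real.pi * ∑ k ∈ Finset.range N, ‖a k‖ ^ 2 / 4) ≤
      ENNReal.ofReal C := by
    intro N
    refine le_trans ?_ hC
    have step : ∀ r ∈ Set.Ioo (0 : ℝ) 1,
        ENNReal.ofReal (r * ((1 - r ^ 2) * (2 * Real.pi * ∑ k ∈ Finset.range N,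
          ‖a k * n k‖ ^ 2 * r ^ (2 * (n k - 1))))) ≤
        ENNReal.ofReal r * ∫⁻ θ in Set.Ioo (-Real.pi) Real.pi,
          ENNReal.ofReal (‖F (circleMap 0 r θ)‖ ^ 2 * (1 - ‖circleMap 0 r θ‖ ^ 2)) := by
      intro r hr
      have e : ∀ θ, ‖circleMap 0 r θ‖ = r := fun θ => by simp [abs_of_pos hr.1]
      have hmem : ∀ θ, circleMap 0 r θ ∈ ball (0 : ℂ) 1 := fun θ => by
        rw [mem_ball_zero_iff, e]; exact hr.2
      have hcont : Continuous fun θ => F (circleMap 0 r θ) :=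
        hFc.comp_continuous (continuous_circleMap 0 r) hmem
      have hsum : Summable fun k => ‖a k * n k‖ * r ^ (n k - 1) := by
        have := (hF (circleMap 0 r 0) (hmem 0)).summable.norm
        refine this.congr fun k => ?_
        rw [norm_mul, norm_mul, norm_mul, norm_pow, e]; ring
      have hB := bessel (fun k => a k * n k) (fun k => n k - 1) hinj'
        (fun θ => F (circleMap 0 r θ)) r hr.1 hsum
        (fun θ => by
          have := hF _ (hmem θ)
          simpa only [mul_assoc] using this) hcont N
      simp_rw [e]
      rw [ENNReal.ofReal_mul hr.1.le]
      gcongr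
      have h1r : 0 ≤ 1 - r ^ 2 := by nlinarith [hr.1, hr.2]
      rw [← ofReal_integral_eq_lintegral_ofReal]
      · apply ENNReal.ofReal_le_ofReal
        rw [integral_mul_const, mul_comm, ← integral_Ioc_eq_integral_Ioo,
          ← intervalIntegral.integral_of_le (by linarith [Real.pi_pos])]
        exact mul_le_mul_of_nonneg_right hB h1r
      · have : Continuous fun θ => ‖F (circleMap 0 r θ)‖ ^ 2 * (1 - r ^ 2) :=
          (hcont.norm.pow 2).mul_const _
        exact (this.integrableOn_Icc (a := -Real.pi) (b := Real.pi)).mono_set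
          Set.Ioo_subset_Icc_self
      · exact Filter.Eventually.of_forall fun θ => mul_nonneg (by positivity) h1r
    refine le_trans ?_ (setLIntegral_mono' measurableSet_Ioo step)
    rw [← ofReal_integral_eq_lintegral_ofReal]
    · apply ENNReal.ofReal_le_ofReal
      rw [← integral_Ioc_eq_integral_Ioo, ← intervalIntegral.integral_of_le zero_le_one]
      have e : ∀ r : ℝ, r * ((1 - r ^ 2) * (2 * Real.pi * ∑ k ∈ Finset.range N,
          ‖a k * n k‖ ^ 2 * r ^ (2 * (n k - 1)))) = 2 * Real.pi * ∑ k ∈ Finset.range N,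
          ‖a k * n k‖ ^ 2 * (r * (1 - r ^ 2) * r ^ (2 * (n k - 1))) := by
        intro r
        rw [Finset.mul_sum, Finset.mul_sum, Finset.mul_sum, Finset.mul_sum]
        exact Finset.sum_congr rfl fun k _ => by ring
      simp_rw [e]
      rw [intervalIntegral.integral_const_mul, intervalIntegral.integral_finsetSum]
      · gcongr with k hk
        rw [intervalIntegral.integral_const_mul, rad_int _ (hpos k), norm_mul, mul_pow,
          Complex.norm_natCast]
        have h1 : (1 : ℝ) ≤ n k := by exact_mod_cast hpos k
        rw [div_eq_mul_one_div, mul_assoc]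
        gcongr
        rw [mul_one_div, div_le_div_iff₀ (by norm_num) (by positivity)]
        nlinarith
      · intro k _
        apply Continuous.intervalIntegrable
        fun_prop
    · refine (Continuous.integrableOn_Icc (a := 0) (b := 1) ?_).mono_set Set.Ioo_subset_Icc_self
      fun_prop
    · refine (ae_restrict_iff' measurableSet_Ioo).2 (Filter.Eventually.of_forall fun r hr => ?_)
      have h1r : 0 ≤ 1 - r ^ 2 := by nlinarith [hr.1, hr.2]
      have := hr.1
      have : 0 ≤ ∑ k ∈ Finset.range N, ‖a k * n k‖ ^ 2 * r ^ (2 * (n k - 1)) :=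
        Finset.sum_nonneg fun k _ => by positivity
      simp only [Pi.zero_apply]
      positivity
  refine summable_of_sum_range_le (c := max C 0 * 4 / (2 * Real.pi)) (fun k => by positivity)
    fun N => ?_
  have h := hbd N
  rw [ENNReal.ofReal_le_ofReal_iff', ] at h
  rw [le_div_iff₀ (by positivity)]
  rw [← Finset.sum_div] at h
  have h1 := le_max_left C 0
  have h2 := le_max_right C 0
  rcases h with h | h <;> nlinarith

/-- A lacunary series `f(z) = ∑ aₖ z^{nₖ}` (with `n_{k+1} ≥ λ nₖ`, `λ > 1`)
analytic on `𝔻` belongs to `BMOA` iff `∑ |aₖ|² < ∞`. -/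
theorem statement6 (a : ℕ → ℂ) (n : ℕ → ℕ) (lam : ℝ) (hlam : 1 < lam)
    (hpos : ∀ k, 0 < n k)
    (hlac : ∀ k, lam * (n k : ℝ) ≤ (n (k + 1) : ℝ))
    (f : ℂ → ℂ)
    (hf : ∀ z ∈ Metric.ball (0 : ℂ) 1, HasSum (fun k => a k * z ^ n k) (f z)) :
    MemBMOA f ↔ Summable (fun k => ‖a k‖ ^ 2) := by
  obtain ⟨hd, hF⟩ := deriv_facts a n f hf
  have hmono : StrictMono n := by
    refine strictMono_nat_of_lt_succ fun k => ?_
    have h1 : (0 : ℝ) < n k := by exact_mod_cast hpos k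
    have : (n k : ℝ) < n (k + 1) := by nlinarith [hlac k]
    exact_mod_cast this
  constructor
  · rintro ⟨_, C, hC⟩
    refine forward a n hmono.injective hpos (deriv f) (measurable_deriv f)
      (hd.deriv isOpen_ball).continuousOn hF C ?_
    simpa using hC 0 (by simp)
  · intro hs
    exact ⟨hd, _, fun b hb => backward a n lam hlam hpos hlac (deriv f) hF hs b (by simpa using hb)⟩
end

section
/- There exists a complex measure μ on 𝔻 such that sup_{w∈𝔻} |∫_𝔻 (1-|w|²)/(1 - w̄ z)² dμ(z)| < ∞, but μ is not a Hankel measure, i.e., there is no constant C with |∫_𝔻 f² dμ| ≤ C ‖f‖²_{H²} for all f ∈ H². -/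
open MeasureTheory Complex Metric Real

/-- The complex measure `dμ = h dν` (with `ν` a finite positive measure on `𝔻`) is a
Hankel measure: there is `C` with `|∫_𝔻 f² dμ| ≤ C ‖f‖²_{H²}` for all `f ∈ H²`,
phrased by testing against every bound `M` on the square of the `H²` norm of `f`. -/
def IsHankelMeasure (ν : Measure ℂ) (h : ℂ → ℂ) : Prop :=
  ∃ C : ℝ, ∀ f : ℂ → ℂ, DifferentiableOn ℂ f (Metric.ball 0 1) →
    ∀ M : ℝ,
      (∀ r ∈ Set.Ioo (0 : ℝ) 1,
        (2 * π)⁻¹ * (∫ θ in (0 : ℝ)..(2 * π),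
          ‖f ((r : ℂ) * Complex.exp (θ * Complex.I))‖ ^ 2) ≤ M) →
      ‖∫ z, f z ^ 2 * h z ∂ν‖ ≤ C * M


lemma expint (a b : ℕ) (c : ℝ) : ∫ θ in c..(c + 2 * π), Complex.exp (((a:ℂ) - b) * Complex.I * θ)
    = if a = b then ((2 * π : ℝ) : ℂ) else 0 := by
  split_ifs with h
  · subst h; simp
  · have h1 : ((a:ℂ) - b) * Complex.I ≠ 0 := by
      refine mul_ne_zero (sub_ne_zero.2 (by exact_mod_cast h)) Complex.I_ne_zero
    rw [integral_exp_mul_complex h1]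
    have : Complex.exp (((a:ℂ) - b) * Complex.I * ((c + 2 * π : ℝ):ℂ))
        = Complex.exp (((a:ℂ) - b) * Complex.I * (c:ℂ)) := by
      rw [Complex.exp_eq_exp_iff_exists_int]
      exact ⟨(a:ℤ) - b, by push_cast; ring⟩
    rw [this]; simp

lemma powexp (a b : ℕ) (r θ : ℝ) :
   ((r:ℂ) * Complex.exp (θ * Complex.I)) ^ a * (starRingEnd ℂ ((r:ℂ) * Complex.exp (θ * Complex.I))) ^ b
   = ((r ^ (a + b) : ℝ) : ℂ) * Complex.exp (((a:ℂ) - b) * Complex.I * θ) := by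
  rw [map_mul, ← Complex.exp_conj]
  simp only [map_mul, conj_ofReal, conj_I, mul_pow, ← Complex.exp_nat_mul]
  rw [show ((a:ℂ) - b) * Complex.I * θ = a * (θ * Complex.I) + b * (θ * - Complex.I) by ring, Complex.exp_add]
  push_cast; ring

lemma mono_int (a b : ℕ) : ∫ z in ball (0:ℂ) 1, z ^ a * (starRingEnd ℂ z) ^ b
    = if a = b then ((π / (a + 1) : ℝ) : ℂ) else 0 := by
  rw [← integral_indicator measurableSet_ball, ← Complex.integral_comp_polarCoord_symm]
  have key : ∀ p ∈ polarCoord.target, p.1 • (ball (0:ℂ) 1).indicator (fun z => z ^ a * (starRingEnd ℂ z) ^ b) (Complex.polarCoord.symm p)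
     = (fun r : ℝ => (Set.Iio (1:ℝ)).indicator (fun r : ℝ => ((r ^ (a + b + 1) : ℝ) : ℂ)) r) p.1 * (fun θ : ℝ => Complex.exp (((a:ℂ) - b) * Complex.I * θ)) p.2 := by
    rintro ⟨r, θ⟩ hp
    simp only [polarCoord_target, Set.mem_prod, Set.mem_Ioi] at hp
    have e : Complex.polarCoord.symm (r, θ) = (r:ℂ) * Complex.exp (θ * Complex.I) := by
      rw [Complex.polarCoord_symm_apply, Complex.exp_mul_I]
      simp
    have hn : ‖(r:ℂ) * Complex.exp (θ * Complex.I)‖ = r := by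
      rw [norm_mul, Complex.norm_exp_ofReal_mul_I, mul_one, Complex.norm_real, Real.norm_of_nonneg hp.1.le]
    rw [e]
    have hm : ((r:ℂ) * Complex.exp (θ * Complex.I) ∈ ball (0:ℂ) 1) ↔ r < 1 := by
      rw [mem_ball_zero_iff, hn]
    beta_reduce
    by_cases hr : r < 1
    · rw [Set.indicator_of_mem (hm.2 hr), Set.indicator_of_mem (Set.mem_Iio.2 hr), powexp]
      simp; ring
    · rw [Set.indicator_of_notMem (fun h => hr (hm.1 h)), Set.indicator_of_notMem (by rw [Set.mem_Iio]; exact hr)]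
      simp
  rw [setIntegral_congr_fun polarCoord.open_target.measurableSet key, polarCoord_target]
  rw [Measure.volume_eq_prod, setIntegral_prod_mul (fun r : ℝ => (Set.Iio (1:ℝ)).indicator (fun r : ℝ => ((r ^ (a + b + 1) : ℝ) : ℂ)) r) (fun θ : ℝ => Complex.exp (((a:ℂ) - b) * Complex.I * θ))]
  rw [← integral_Ioc_eq_integral_Ioo, ← intervalIntegral.integral_of_le (by linarith [Real.pi_pos])]
  have := expint a b (-π)
  rw [show -π + 2 * π = π by ring] at this
  rw [this, setIntegral_indicator measurableSet_Iio]
  rw [show Set.Ioi (0:ℝ) ∩ Set.Iio 1 = Set.Ioo 0 1 from rfl, ← integral_Ioc_eq_integral_Ioo, ← intervalIntegral.integral_of_le (by norm_num),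
    intervalIntegral.integral_ofReal, integral_pow]
  split_ifs with h
  · subst h
    rw [← Complex.ofReal_mul]; congr 1
    have : (a:ℝ) + 1 ≠ 0 := by positivity
    push_cast; field_simp; simp; ring
  · simp

open Polynomial
lemma ev_mul (p q : ℝ[X]) (z : ℂ) (D : ℕ) (hp : p.natDegree < D) (hq : q.natDegree < D) :
    aeval z p * (starRingEnd ℂ) (aeval z q) = ∑ i ∈ Finset.range D, ∑ j ∈ Finset.range D,
      ((p.coeff i * q.coeff j : ℝ) : ℂ) * (z ^ i * (starRingEnd ℂ z) ^ j) := by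
  rw [aeval_eq_sum_range' hp, aeval_eq_sum_range' hq, map_sum, Finset.sum_mul_sum]
  refine Finset.sum_congr rfl fun i _ => Finset.sum_congr rfl fun j _ => ?_
  simp [Complex.real_smul]; ring

lemma int_ball {f : ℂ → ℂ} (hf : Continuous f) : IntegrableOn f (ball (0:ℂ) 1) :=
  (hf.continuousOn.integrableOn_compact (isCompact_closedBall (0:ℂ) 1)).mono_set ball_subset_closedBall

lemma pair (p q : ℝ[X]) (D : ℕ) (hp : p.natDegree < D) (hq : q.natDegree < D) :
    ∫ z in ball (0:ℂ) 1, aeval z p * (starRingEnd ℂ) (aeval z q)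
      = ((∑ n ∈ Finset.range D, p.coeff n * q.coeff n * (π / (n + 1)) : ℝ) : ℂ) := by
  simp_rw [ev_mul p q _ D hp hq]
  have hc : ∀ i j : ℕ, Continuous fun z : ℂ => ((p.coeff i * q.coeff j : ℝ) : ℂ) * (z ^ i * (starRingEnd ℂ z) ^ j) := by
    intro i j; fun_prop
  rw [integral_finsetSum _ fun i _ => int_ball (continuous_finsetSum _ fun j _ => hc i j)]
  rw [Complex.ofReal_sum]
  refine Finset.sum_congr rfl fun i hi => ?_
  rw [integral_finsetSum _ fun j _ => int_ball (hc i j)]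
  simp_rw [integral_const_mul, mono_int]
  simp only [mul_ite, mul_zero, Finset.sum_ite_eq, hi, if_true]
  push_cast; ring

lemma circ (p : ℝ[X]) (D : ℕ) (hp : p.natDegree < D) (r : ℝ) (hr : r ∈ Set.Ioo (0:ℝ) 1) :
    (2 * π)⁻¹ * (∫ θ in (0 : ℝ)..(2 * π),
          ‖aeval ((r : ℂ) * Complex.exp (θ * Complex.I)) p‖ ^ 2) ≤ ∑ n ∈ Finset.range D, p.coeff n ^ 2 := by
  have : ((∫ θ in (0 : ℝ)..(2 * π), ‖aeval ((r : ℂ) * Complex.exp (θ * Complex.I)) p‖ ^ 2 : ℝ) : ℂ)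
     = ((∑ n ∈ Finset.range D, p.coeff n ^ 2 * r ^ (n + n) * (2 * π) : ℝ) : ℂ) := by
    rw [← intervalIntegral.integral_ofReal]
    push_cast
    simp_rw [← Complex.mul_conj', ev_mul p p _ D hp hp, powexp]
    have hc : ∀ i j : ℕ, IntervalIntegrable (fun θ : ℝ => ((p.coeff i * p.coeff j : ℝ) : ℂ) * (((r ^ (i + j) : ℝ) : ℂ) * Complex.exp (((i:ℂ) - j) * Complex.I * θ))) volume 0 (2 * π) := by
      intro i j; apply Continuous.intervalIntegrable; fun_prop
    rw [intervalIntegral.integral_finsetSum fun i _ => by simpa only [Finset.sum_fn] using IntervalIntegrable.sum (Finset.range D) fun j _ => hc i j]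
    refine Finset.sum_congr rfl fun i hi => ?_
    rw [intervalIntegral.integral_finsetSum fun j _ => hc i j]
    have := fun i j => expint i j 0
    simp only [zero_add] at this
    simp_rw [intervalIntegral.integral_const_mul, this]
    simp only [mul_ite, mul_zero, Finset.sum_ite_eq, hi, if_true]
    push_cast; ring
  rw [Complex.ofReal_inj.1 this, Finset.mul_sum]
  refine Finset.sum_le_sum fun n _ => ?_
  have h1 : r ^ (n + n) ≤ 1 := pow_le_one₀ hr.1.le hr.2.le
  have : (2 * π)⁻¹ * (p.coeff n ^ 2 * r ^ (n + n) * (2 * π)) = p.coeff n ^ 2 * r ^ (n+n) := by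
    have := Real.pi_pos; field_simp
  rw [this]; nlinarith [sq_nonneg (p.coeff n)]

/-- reproducing property -/
lemma repro (q : ℝ[X]) (w : ℂ) (hw : w ∈ ball (0:ℂ) 1) :
    ∫ z in ball (0:ℂ) 1, (((1 - ‖w‖ ^ 2 : ℝ) : ℂ) / (1 - (starRingEnd ℂ) w * z) ^ 2) * (starRingEnd ℂ) (aeval z q)
      = ((π * (1 - ‖w‖ ^ 2) : ℝ) : ℂ) * (starRingEnd ℂ) (aeval w q) := by
  have hw' : ‖w‖ < 1 := by simpa using hw
  set μ := (volume : Measure ℂ).restrict (ball (0:ℂ) 1)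
  set F : ℕ → ℂ → ℂ := fun n z => ((n + 1 : ℂ) * (starRingEnd ℂ w) ^ n) * (z ^ n * (starRingEnd ℂ) (aeval z q)) with hF
  have hqc : Continuous fun z : ℂ => (starRingEnd ℂ) (aeval z q) := by
    exact Complex.continuous_conj.comp (Polynomial.continuous_aeval q)
  have hFi : ∀ n, Integrable (F n) μ := fun n => int_ball (by simp only [hF]; fun_prop)
  have hg := hasSum_choose_mul_geometric_of_norm_lt_one 1 (r := ‖w‖) (by simpa using hw')
  have hs : Summable fun n => ∫ z, ‖F n z‖ ∂μ := by
    refine Summable.of_nonneg_of_le (fun n => integral_nonneg fun _ => norm_nonneg _) (fun n => ?_)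
      (hg.summable.mul_right (∫ z, ‖(starRingEnd ℂ) (aeval z q)‖ ∂μ))
    rw [← integral_const_mul]
    refine integral_mono_ae (hFi n).norm ((int_ball hqc).norm.const_mul _) ?_
    filter_upwards [ae_restrict_mem measurableSet_ball] with z hz
    have hz' : ‖z‖ ≤ 1 := by have : ‖z‖ < 1 := by simpa using hz
                             exact this.le
    have : ‖(n + 1 : ℂ)‖ = n + 1 := by
      rw [← Nat.cast_succ, Complex.norm_natCast]; simp
    simp only [hF, norm_mul, norm_pow, RCLike.norm_conj, this]
    rw [Nat.choose_one_right]; push_cast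
    refine mul_le_mul_of_nonneg_left ?_ (by positivity)
    exact mul_le_of_le_one_left (norm_nonneg _) (pow_le_one₀ (norm_nonneg _) hz')
  have h1 := hasSum_integral_of_summable_integral_norm hFi hs
  have h2 : ∫ z, ∑' n, F n z ∂μ = ∫ z, (1 / (1 - (starRingEnd ℂ) w * z) ^ 2) * (starRingEnd ℂ) (aeval z q) ∂μ := by
    refine integral_congr_ae ?_
    filter_upwards [ae_restrict_mem measurableSet_ball] with z hz
    have hz' : ‖z‖ < 1 := by simpa using hz
    have := hasSum_choose_mul_geometric_of_norm_lt_one 1 (r := (starRingEnd ℂ) w * z) (by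
      rw [norm_mul, RCLike.norm_conj]; nlinarith [norm_nonneg w, norm_nonneg z])
    rw [← (this.mul_right ((starRingEnd ℂ) (aeval z q))).tsum_eq]
    refine tsum_congr fun n => ?_
    simp only [hF, Nat.choose_one_right]; push_cast; ring
  have h3 : ∀ n, ∫ z, F n z ∂μ = ((π * q.coeff n : ℝ) : ℂ) * (starRingEnd ℂ w) ^ n := by
    intro n
    simp only [hF]
    rw [integral_const_mul]
    have := pair (X ^ n) q (n + q.natDegree + 1) (by rw [natDegree_X_pow]; omega) (by omega)
    simp only [map_pow, aeval_X] at this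
    rw [this]
    simp only [coeff_X_pow, ite_mul, one_mul, zero_mul, Finset.sum_ite_eq']
    rw [if_pos (by rw [Finset.mem_range]; omega)]
    have : (n:ℂ) + 1 ≠ 0 := by exact_mod_cast Nat.succ_ne_zero n
    push_cast; field_simp
  have h4 : ∑' n, ∫ z, F n z ∂μ = (π:ℂ) * (starRingEnd ℂ) (aeval w q) := by
    rw [tsum_eq_sum (s := Finset.range (q.natDegree + 1))]
    · rw [aeval_eq_sum_range, map_sum, Finset.mul_sum]
      refine Finset.sum_congr rfl fun n _ => ?_
      rw [h3]; simp [Complex.real_smul, mul_assoc]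
    · intro n hn
      rw [h3, coeff_eq_zero_of_natDegree_lt (by simpa using hn)]; simp
  have h5 := h1.tsum_eq
  rw [h2, h4] at h5
  calc _ = ∫ z, ((1 - ‖w‖ ^ 2 : ℝ) : ℂ) * ((1 / (1 - (starRingEnd ℂ) w * z) ^ 2) * (starRingEnd ℂ) (aeval z q)) ∂μ := by
        congr 1; ext z; ring
    _ = _ := by rw [integral_const_mul, ← h5]; push_cast; ring

lemma integrable_tsum_aux {μ : Measure ℂ} {F : ℕ → ℂ → ℂ} (hF : ∀ i, Integrable (F i) μ)
    (hs : Summable fun i => ∫ z, ‖F i z‖ ∂μ) (hp : ∀ᵐ z ∂μ, Summable fun i => F i z) :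
    Integrable (fun z => ∑' i, F i z) μ := by
  have hm : AEStronglyMeasurable (fun z => ∑' i, F i z) μ := by
    refine aestronglyMeasurable_of_tendsto_ae Filter.atTop
      (f := fun n z => ∑ i ∈ Finset.range n, F i z) (fun n => ?_) ?_
    · exact (integrable_finsetSum _ fun i _ => hF i).aestronglyMeasurable
    · filter_upwards [hp] with z hz using hz.hasSum.tendsto_sum_nat
  refine ⟨hm, ?_⟩
  rw [hasFiniteIntegral_iff_enorm]
  calc ∫⁻ z, ‖∑' i, F i z‖ₑ ∂μ ≤ ∫⁻ z, ∑' i, ‖F i z‖ₑ ∂μ := by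
        refine lintegral_mono_ae ?_
        filter_upwards [hp] with z hz using enorm_tsum_le_tsum_enorm
    _ = ∑' i, ∫⁻ z, ‖F i z‖ₑ ∂μ := lintegral_tsum fun i => (hF i).aestronglyMeasurable.enorm
    _ = ∑' i, ENNReal.ofReal (∫ z, ‖F i z‖ ∂μ) := by
        refine tsum_congr fun i => ?_
        rw [ofReal_integral_norm_eq_lintegral_enorm (hF i)]
    _ < ⊤ := hs.tsum_ofReal_lt_top

def NN (p : ℝ[X]) : Prop := ∀ n, 0 ≤ p.coeff n

lemma NN.add {p q : ℝ[X]} (hp : NN p) (hq : NN q) : NN (p + q) := fun n => by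
  rw [coeff_add]; exact add_nonneg (hp n) (hq n)
lemma NN.mul {p q : ℝ[X]} (hp : NN p) (hq : NN q) : NN (p * q) := fun n => by
  rw [coeff_mul]; exact Finset.sum_nonneg fun x _ => mul_nonneg (hp _) (hq _)
lemma NN.pow {p : ℝ[X]} (hp : NN p) : NN (p ^ 2) := by rw [pow_two]; exact hp.mul hp
lemma NN.sum {s : Finset ℕ} {p : ℕ → ℝ[X]} (hp : ∀ i, NN (p i)) : NN (∑ i ∈ s, p i) := fun n => by
  rw [finsetSum_coeff]; exact Finset.sum_nonneg fun x _ => hp _ _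
lemma NN.C {c : ℝ} (hc : 0 ≤ c) : NN (Polynomial.C c) := fun n => by
  rw [coeff_C]; split_ifs <;> simp [hc]
lemma NN.X (k : ℕ) : NN (Polynomial.X ^ k) := fun n => by
  rw [coeff_X_pow]; split_ifs <;> simp

noncomputable def phi (N : ℕ) : ℝ[X] := C (1 / (N:ℝ)) * ∑ i ∈ Finset.range N, X ^ i
def ak (N k : ℕ) : ℕ := 2 * (N * 2 ^ k)
noncomputable def Fp (N : ℕ) : ℝ[X] := ∑ k ∈ Finset.range N, X ^ (ak N k)
noncomputable def Qp (N : ℕ) : ℝ[X] := ∑ k ∈ Finset.range N, C (ak N k : ℝ) * X ^ (ak N k)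
noncomputable def qp (N : ℕ) : ℝ[X] := phi N ^ 2 * Qp N
noncomputable def fp (s : ℕ) : ℝ[X] := phi (s ^ 2) * (C (s:ℝ) + Fp (s ^ 2))

lemma NN_phi (N : ℕ) : NN (phi N) := (NN.C (by positivity)).mul (NN.sum fun i => NN.X i)
lemma NN_Fp (N : ℕ) : NN (Fp N) := NN.sum fun i => NN.X _
lemma NN_Qp (N : ℕ) : NN (Qp N) := NN.sum fun i => (NN.C (by positivity)).mul (NN.X _)
lemma NN_qp (N : ℕ) : NN (qp N) := (NN_phi N).pow.mul (NN_Qp N)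
lemma NN_fp (s : ℕ) : NN (fp s) := (NN_phi _).mul ((NN.C (by positivity)).add (NN_Fp _))

lemma aeval_phi (N : ℕ) (z : ℂ) : aeval z (phi N) = (1 / (N:ℂ)) * ∑ i ∈ Finset.range N, z ^ i := by
  simp [phi, map_sum, aeval_C]

lemma phi_le (N : ℕ) (z : ℂ) (hz : ‖z‖ < 1) : ‖aeval z (phi N)‖ ≤ 1 := by
  rw [aeval_phi, norm_mul]
  have : ‖∑ i ∈ Finset.range N, z ^ i‖ ≤ N := by
    refine (norm_sum_le _ _).trans ((Finset.sum_le_sum (g := fun _ => (1:ℝ)) fun i _ => ?_).trans (by simp))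
    rw [norm_pow]; exact pow_le_one₀ (norm_nonneg _) hz.le
  simp only [norm_div, norm_one, Complex.norm_natCast]
  rcases Nat.eq_zero_or_pos N with h | h
  · subst h; simp
  · have : (0:ℝ) < N := by exact_mod_cast h
    rw [div_mul_eq_mul_div, one_mul, div_le_one this]; assumption

lemma lac (N L : ℕ) (r : ℝ) (h0 : 0 ≤ r) (h1 : r < 1) :
    ∑ k ∈ Finset.range (L + 1), (ak N k : ℝ) * r ^ (ak N k) ≤ 2 * ∑ n ∈ Finset.range (ak N L), r ^ n := by
  have key : ∀ a b : ℕ, (b:ℝ) * r ^ (a + b) ≤ ∑ n ∈ Finset.range b, r ^ (a + n) := by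
    intro a b
    have : ∑ n ∈ Finset.range b, r ^ (a + b) ≤ ∑ n ∈ Finset.range b, r ^ (a + n) :=
      Finset.sum_le_sum fun n hn => pow_le_pow_of_le_one h0 h1.le (by simp at hn; omega)
    simpa using this
  induction L with
  | zero =>
    have := key 0 (ak N 0)
    simp only [zero_add] at this
    simp only [zero_add, Finset.sum_range_one]
    have h3 : 0 ≤ ∑ n ∈ Finset.range (ak N 0), r ^ n := Finset.sum_nonneg fun _ _ => by positivity
    linarith
  | succ L ih =>
    rw [Finset.sum_range_succ]
    have e : ak N (L + 1) = ak N L + ak N L := by simp only [ak]; ring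
    have := key (ak N L) (ak N L)
    have h2 := Finset.sum_range_add (fun n => r ^ n) (ak N L) (ak N L)
    beta_reduce at h2
    rw [e, h2]
    push_cast
    linarith

lemma Qp_le (N : ℕ) (z : ℂ) : ‖aeval z (Qp N)‖ ≤ ∑ k ∈ Finset.range N, (ak N k : ℝ) * ‖z‖ ^ (ak N k) := by
  simp only [Qp, map_sum, map_mul, map_pow, aeval_X, aeval_C]
  refine (norm_sum_le _ _).trans (le_of_eq (Finset.sum_congr rfl fun k _ => ?_))
  simp

lemma Qp_le' (N : ℕ) (z : ℂ) (hz : ‖z‖ < 1) : ‖aeval z (Qp N)‖ * (1 - ‖z‖) ≤ 2 := by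
  have h := Qp_le N z
  rcases N with _ | L
  · simp [Qp]
  have h2 := lac (L + 1) L ‖z‖ (norm_nonneg _) hz
  have h3 : (∑ n ∈ Finset.range (ak (L+1) L), ‖z‖ ^ n) * (1 - ‖z‖) = 1 - ‖z‖ ^ (ak (L+1) L) :=
    geom_sum_mul_neg _ _
  have h4 : 0 ≤ ‖z‖ ^ (ak (L+1) L) := by positivity
  have h5 := mul_le_mul_of_nonneg_right (h.trans h2) (sub_nonneg.2 hz.le)
  linarith

lemma qp_le (N : ℕ) (z : ℂ) (hz : ‖z‖ < 1) : ‖aeval z (qp N)‖ * (1 - ‖z‖) ≤ 2 := by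
  have h1 := Qp_le' N z hz
  have h2 := phi_le N z hz
  rw [qp, map_mul, map_pow, norm_mul, norm_pow, mul_assoc]
  have h3 : ‖aeval z (phi N)‖ ^ 2 ≤ 1 := pow_le_one₀ (norm_nonneg _) h2
  have h4 : 0 ≤ ‖aeval z (Qp N)‖ * (1 - ‖z‖) := mul_nonneg (norm_nonneg _) (by linarith)
  calc _ ≤ 1 * (‖aeval z (Qp N)‖ * (1 - ‖z‖)) := mul_le_mul_of_nonneg_right h3 h4
    _ ≤ 2 := by linarith

lemma coeff_phi (N n : ℕ) : (phi N).coeff n = if n < N then 1 / (N:ℝ) else 0 := by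
  simp [phi, coeff_C_mul, coeff_X_pow]

lemma deg_phi (N : ℕ) (hN : 0 < N) : (phi N).natDegree < N := by
  rw [Nat.lt_iff_le_pred hN, natDegree_le_iff_coeff_eq_zero]
  intro n hn
  rw [coeff_phi, if_neg]; omega

lemma qp_int (N : ℕ) (hN : 0 < N) : ∫ z in ball (0:ℂ) 1, ‖aeval z (qp N)‖ ≤ 2 * π := by
  have hN' : (0:ℝ) < N := by exact_mod_cast hN
  have hcont : ∀ p : ℝ[X], Continuous fun z : ℂ => aeval z p := fun p => Polynomial.continuous_aeval p
  set b : ℕ → ℕ := fun k => N * 2 ^ k with hb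
  have hbpos : ∀ k, (0:ℝ) < b k := fun k => by simp only [hb]; positivity
  have hre : ∀ k, ∫ z in ball (0:ℂ) 1, ‖aeval z (phi N * X ^ (b k))‖ ^ 2 ≤ π / (N * b k) := by
    intro k
    have hd : (phi N * X ^ (b k)).natDegree < b k + N := by
      refine lt_of_le_of_lt natDegree_mul_le ?_
      rw [natDegree_X_pow]; have := deg_phi N hN; omega
    have h1 := pair (phi N * X ^ (b k)) (phi N * X ^ (b k)) (b k + N) hd hd
    simp_rw [Complex.mul_conj'] at h1
    have h2 : ((∫ z in ball (0:ℂ) 1, ‖aeval z (phi N * X ^ (b k))‖ ^ 2 : ℝ) : ℂ) = 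
       ((∑ n ∈ Finset.range (b k + N), (phi N * X ^ (b k)).coeff n * (phi N * X ^ (b k)).coeff n * (π / (n + 1)) : ℝ) : ℂ) := by
      rw [← h1, ← integral_complex_ofReal]; push_cast; rfl
    rw [Complex.ofReal_inj.1 h2, Finset.sum_range_add]
    rw [Finset.sum_eq_zero (s := Finset.range (b k)), zero_add]
    · calc _ ≤ ∑ i ∈ Finset.range N, (1 / (N:ℝ)) * (1 / N) * (π / b k) := by
            refine Finset.sum_le_sum fun i hi => ?_
            rw [add_comm (b k) i, coeff_mul_X_pow, coeff_phi, if_pos (by simpa using hi)]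
            have := hbpos k
            refine mul_le_mul_of_nonneg_left ?_ (by positivity)
            refine div_le_div_of_nonneg_left Real.pi_pos.le this ?_
            push_cast
            have : (0:ℝ) ≤ i := by positivity
            linarith
        _ = π / (N * b k) := by
            have := hbpos k
            simp; field_simp
    · intro n hn
      rw [coeff_mul_X_pow', if_neg (by simpa using hn)]; simp
  calc ∫ z in ball (0:ℂ) 1, ‖aeval z (qp N)‖
      ≤ ∫ z in ball (0:ℂ) 1, ∑ k ∈ Finset.range N, (ak N k : ℝ) * ‖aeval z (phi N * X ^ (b k))‖ ^ 2 := by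
        refine integral_mono (int_ball (hcont _)).norm ?_ fun z => ?_
        · have : Continuous fun z : ℂ => ∑ k ∈ Finset.range N, (ak N k : ℝ) * ‖aeval z (phi N * X ^ (b k))‖ ^ 2 := by
            have := hcont; fun_prop
          exact (this.continuousOn.integrableOn_compact (isCompact_closedBall (0:ℂ) 1)).mono_set ball_subset_closedBall
        · beta_reduce
          rw [qp, map_mul, map_pow, norm_mul, norm_pow]
          refine (mul_le_mul_of_nonneg_left (Qp_le N z) (by positivity)).trans (le_of_eq ?_)
          rw [Finset.mul_sum]
          refine Finset.sum_congr rfl fun k _ => ?_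
          simp only [map_mul, map_pow, aeval_X, norm_mul, norm_pow, ak, hb]
          ring
    _ = ∑ k ∈ Finset.range N, (ak N k : ℝ) * ∫ z in ball (0:ℂ) 1, ‖aeval z (phi N * X ^ (b k))‖ ^ 2 := by
        rw [integral_finsetSum]
        · simp_rw [integral_const_mul]
        · intro k _
          have : Continuous fun z : ℂ => (ak N k : ℝ) * ‖aeval z (phi N * X ^ (b k))‖ ^ 2 := by
            have := hcont; fun_prop
          exact (this.continuousOn.integrableOn_compact (isCompact_closedBall (0:ℂ) 1)).mono_set ball_subset_closedBall
    _ ≤ ∑ k ∈ Finset.range N, 2 * π / N := by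
        refine Finset.sum_le_sum fun k _ => (mul_le_mul_of_nonneg_left (hre k) (by positivity)).trans (le_of_eq ?_)
        have := hbpos k
        have e : (ak N k : ℝ) = 2 * b k := by simp [ak, hb]
        rw [e]; field_simp
    _ = 2 * π := by simp; field_simp

lemma phiF_sq (N D : ℕ) (hN : 0 < N) (hD : (phi N * Fp N).natDegree < D) : ∑ n ∈ Finset.range D, (phi N * Fp N).coeff n ^ 2 ≤ 1 := by
  have hN' : (0:ℝ) < N := by exact_mod_cast hN
  have hc : ∀ n, (phi N * Fp N).coeff n ≤ 1 / N := by
    intro n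
    have e : (phi N * Fp N).coeff n = ∑ k ∈ Finset.range N, if ak N k ≤ n ∧ n < ak N k + N then 1 / (N:ℝ) else 0 := by
      rw [Fp, Finset.mul_sum, finsetSum_coeff]
      refine Finset.sum_congr rfl fun k _ => ?_
      rw [coeff_mul_X_pow', coeff_phi]
      split_ifs <;> first | rfl | omega
    rw [e]
    by_cases hex : ∃ k, ak N k ≤ n ∧ n < ak N k + N
    · obtain ⟨k, hk⟩ := hex
      have huniq : ∀ l, (ak N l ≤ n ∧ n < ak N l + N) → l = k := by
        have aux : ∀ l k, (ak N l ≤ n ∧ n < ak N l + N) → (ak N k ≤ n ∧ n < ak N k + N) → ¬ l < k := by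
          intro l k hl hk hlt
          have h1 : 2 ^ (l + 1) ≤ 2 ^ k := Nat.pow_le_pow_right (by norm_num) hlt
          have h2 : 1 ≤ 2 ^ l := Nat.one_le_two_pow
          have h3 : 2 * (N * 2 ^ (l + 1)) ≤ ak N k := by simp only [ak]; gcongr
          have h4 : 2 * (N * 2 ^ (l + 1)) = ak N l + ak N l := by simp only [ak]; ring
          have h5 : N ≤ ak N l := by simp only [ak]; nlinarith
          omega
        intro l hl
        have := aux l k hl hk
        have := aux k l hk hl
        omega
      calc _ ≤ ∑ l ∈ Finset.range N, if l = k then 1 / (N:ℝ) else 0 := by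
            refine Finset.sum_le_sum fun l _ => ?_
            by_cases h : ak N l ≤ n ∧ n < ak N l + N
            · rw [if_pos h, if_pos (huniq l h)]
            · rw [if_neg h]; split_ifs <;> positivity
        _ ≤ _ := by rw [Finset.sum_ite_eq']; split_ifs <;> first | rfl | positivity
    · push Not at hex
      rw [Finset.sum_eq_zero]
      · positivity
      · intro k _; rw [if_neg]; intro h; have := hex k h.1; omega
  have hnn : NN (phi N * Fp N) := (NN_phi N).mul (NN_Fp N)
  have hsum : ∑ n ∈ Finset.range D, (phi N * Fp N).coeff n = N := by
    have := eval_eq_sum_range' hD 1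
    simp only [one_pow, mul_one] at this
    rw [← this]
    simp only [phi, Fp, eval_mul, eval_C, eval_finsetSum, eval_pow, eval_X, one_pow, Finset.sum_const, Finset.card_range, nsmul_eq_mul, mul_one]
    field_simp
  calc _ ≤ ∑ n ∈ Finset.range D, (1 / (N:ℝ)) * (phi N * Fp N).coeff n := by
        refine Finset.sum_le_sum fun n _ => ?_
        rw [pow_two]; exact mul_le_mul_of_nonneg_right (hc n) (hnn n)
    _ = 1 := by rw [← Finset.mul_sum, hsum]; field_simp

lemma phi_sq (N D : ℕ) (hN : 0 < N) : ∑ n ∈ Finset.range D, (phi N).coeff n ^ 2 ≤ 1 / N := by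
  have hN' : (0:ℝ) < N := by exact_mod_cast hN
  have e : ∀ n, (phi N).coeff n ^ 2 = if n ∈ Finset.range N then 1 / (N:ℝ) ^ 2 else 0 := by
    intro n; rw [coeff_phi]; simp only [Finset.mem_range]; split_ifs <;> simp
  simp_rw [e]
  rw [← Finset.sum_filter]
  calc (_:ℝ) ≤ ∑ n ∈ Finset.range N, 1 / (N:ℝ) ^ 2 := by
        refine Finset.sum_le_sum_of_subset_of_nonneg (fun x hx => (Finset.mem_filter.1 hx).2) fun _ _ _ => by positivity
    _ = 1 / N := by simp; field_simp

lemma fp_sq (s D : ℕ) (hs : 0 < s) (hD : (phi (s^2) * Fp (s^2)).natDegree < D) : ∑ n ∈ Finset.range D, (fp s).coeff n ^ 2 ≤ 4 := by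
  have h1 := phiF_sq (s ^ 2) D (by positivity) hD
  have h2 := phi_sq (s ^ 2) D (by positivity)
  have hs' : (0:ℝ) < s := by exact_mod_cast hs
  calc _ ≤ ∑ n ∈ Finset.range D, (2 * (s:ℝ) ^ 2 * (phi (s^2)).coeff n ^ 2 + 2 * (phi (s^2) * Fp (s^2)).coeff n ^ 2) := by
        refine Finset.sum_le_sum fun n _ => ?_
        rw [fp, mul_add, coeff_add, coeff_mul_C]
        nlinarith [sq_nonneg ((phi (s^2)).coeff n * s - (phi (s^2) * Fp (s^2)).coeff n)]
    _ = 2 * (s:ℝ) ^ 2 * ∑ n ∈ Finset.range D, (phi (s^2)).coeff n ^ 2 + 2 * ∑ n ∈ Finset.range D, (phi (s^2) * Fp (s^2)).coeff n ^ 2 := by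
        rw [Finset.sum_add_distrib, Finset.mul_sum, Finset.mul_sum]
    _ ≤ 2 * (s:ℝ) ^ 2 * (1 / ((s ^ 2 : ℕ) : ℝ)) + 2 * 1 := by gcongr
    _ = 4 := by push_cast; field_simp; norm_num

lemma phi2_low (N : ℕ) (hN : 0 < N) : 1 / (2 * (N:ℝ)) ≤ ∑ i ∈ Finset.range (2 * N), (phi N ^ 2).coeff i ^ 2 := by
  have hN' : (0:ℝ) < N := by exact_mod_cast hN
  have hd : (phi N ^ 2).natDegree < 2 * N := by
    refine lt_of_le_of_lt natDegree_pow_le ?_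
    have := deg_phi N hN; omega
  have := eval_eq_sum_range' hd 1
  simp only [one_pow, mul_one] at this
  have h1 : eval 1 (phi N ^ 2) = 1 := by
    simp only [phi, eval_mul, eval_C, eval_finsetSum, eval_pow, eval_X, one_pow, Finset.sum_const, Finset.card_range, nsmul_eq_mul, mul_one]
    field_simp
  have h2 := sq_sum_le_card_mul_sum_sq (s := Finset.range (2 * N)) (f := fun i => (phi N ^ 2).coeff i)
  rw [← this, h1] at h2
  simp only [Finset.card_range] at h2
  push_cast at h2
  rw [div_le_iff₀ (by positivity)]
  linarith

lemma fq_low (s D : ℕ) (hs : 0 < s) (hD : ∀ k < s ^ 2, ak (s^2) k + 2 * s ^ 2 ≤ D) :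
    s * π / 3 ≤ ∑ n ∈ Finset.range D, (fp s ^ 2).coeff n * (qp (s^2)).coeff n * (π / (n + 1)) := by
  set N := s ^ 2 with hNdef
  have hN : 0 < N := by positivity
  have hN' : (0:ℝ) < N := by exact_mod_cast hN
  set g := phi N ^ 2 with hg
  have hgn : NN g := (NN_phi N).pow
  set c : ℕ → ℕ → ℝ := fun k n => (g * X ^ (ak N k)).coeff n with hcdef
  have hc0 : ∀ k n, 0 ≤ c k n := fun k => hgn.mul (NN.X _)
  have hf : ∀ n, 2 * s * ∑ k ∈ Finset.range N, c k n ≤ (fp s ^ 2).coeff n := by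
    intro n
    have e : fp s ^ 2 = C (2 * s : ℝ) * (g * Fp N) + (g * C ((s:ℝ)^2) + g * (Fp N) ^ 2) := by
      rw [fp, hg, map_mul, map_pow]
      have : (C (2:ℝ)) = 2 := rfl
      rw [this]; ring
    have e2 : (C (2 * s : ℝ) * (g * Fp N)).coeff n = 2 * s * ∑ k ∈ Finset.range N, c k n := by
      rw [coeff_C_mul, Fp, Finset.mul_sum, finsetSum_coeff]
    rw [e, coeff_add, e2]
    have := ((hgn.mul (NN.C (c := (s:ℝ)^2) (by positivity))).add (hgn.mul (NN_Fp N).pow)) n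
    linarith
  have hq : ∀ n, (qp N).coeff n = ∑ k ∈ Finset.range N, ak N k * c k n := by
    intro n
    rw [qp, Qp, Finset.mul_sum, finsetSum_coeff]
    refine Finset.sum_congr rfl fun k _ => ?_
    rw [mul_left_comm, coeff_C_mul]
  have h1 : ∀ n, (2 * s * ∑ k ∈ Finset.range N, ak N k * c k n ^ 2) * (π / (n + 1)) ≤ (fp s ^ 2).coeff n * (qp N).coeff n * (π / (n + 1)) := by
    intro n
    refine mul_le_mul_of_nonneg_right ?_ (by positivity)
    refine le_trans ?_ (mul_le_mul_of_nonneg_right (hf n) (NN_qp N n))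
    rw [mul_assoc (2 * (s:ℝ)) (∑ k ∈ Finset.range N, c k n)]
    refine mul_le_mul_of_nonneg_left ?_ (by positivity)
    rw [Finset.sum_mul]
    refine Finset.sum_le_sum fun k hk => ?_
    have h7 : (ak N k : ℝ) * c k n ≤ (qp N).coeff n := by
      rw [hq]
      exact Finset.single_le_sum (f := fun k => (ak N k : ℝ) * c k n)
        (fun i _ => mul_nonneg (Nat.cast_nonneg _) (hc0 _ _)) hk
    calc (ak N k : ℝ) * c k n ^ 2 = c k n * (ak N k * c k n) := by ring
      _ ≤ _ := mul_le_mul_of_nonneg_left h7 (hc0 _ _)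
  have h2 : ∀ k ∈ Finset.range N, (1 / 3) * (1 / (2 * (N:ℝ))) ≤ ∑ n ∈ Finset.range D, ak N k * c k n ^ 2 / (n + 1) := by
    intro k hk
    have hakN : 2 * N ≤ ak N k := by
      simp only [ak]; have : 1 ≤ 2 ^ k := Nat.one_le_two_pow
      nlinarith
    calc (1 / 3) * (1 / (2 * (N:ℝ))) ≤ (1/3) * ∑ i ∈ Finset.range (2 * N), g.coeff i ^ 2 := by
          have := phi2_low N hN; gcongr
      _ ≤ ∑ i ∈ Finset.range (2 * N), ak N k * c k (ak N k + i) ^ 2 / ((ak N k + i : ℕ) + 1) := by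
          rw [Finset.mul_sum]
          refine Finset.sum_le_sum fun i hi => ?_
          have hi' : i + 1 ≤ 2 * N := by simpa using hi
          have e : c k (ak N k + i) = g.coeff i := by
            simp only [hcdef]; rw [add_comm, coeff_mul_X_pow]
          rw [e, mul_div_right_comm]
          refine mul_le_mul_of_nonneg_right ?_ (sq_nonneg _)
          rw [div_le_div_iff₀ (by norm_num) (by positivity)]
          have : ak N k + i + 1 ≤ ak N k * 3 := by omega
          have : ((ak N k + i + 1 : ℕ) : ℝ) ≤ ((ak N k * 3 : ℕ) : ℝ) := by exact_mod_cast this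
          push_cast at this ⊢
          linarith
      _ ≤ ∑ n ∈ Finset.range (ak N k + 2 * N), ak N k * c k n ^ 2 / ((n:ℝ) + 1) := by
          rw [Finset.sum_range_add]
          have : 0 ≤ ∑ n ∈ Finset.range (ak N k), ak N k * c k n ^ 2 / ((n:ℝ) + 1) := Finset.sum_nonneg fun _ _ => by positivity
          linarith
      _ ≤ _ := by
          refine Finset.sum_le_sum_of_subset_of_nonneg (Finset.range_subset_range.2 (hD k (by simpa using hk))) fun _ _ _ => by positivity
  refine le_trans ?_ (Finset.sum_le_sum fun n _ => h1 n)
  calc s * π / 3 = 2 * s * π * ∑ k ∈ Finset.range N, (1 / 3) * (1 / (2 * (N:ℝ))) := by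
        simp; field_simp
    _ ≤ 2 * s * π * ∑ k ∈ Finset.range N, ∑ n ∈ Finset.range D, ak N k * c k n ^ 2 / ((n:ℝ) + 1) := by
        refine mul_le_mul_of_nonneg_left (Finset.sum_le_sum h2) (by positivity)
    _ = _ := by
        rw [Finset.sum_comm, Finset.mul_sum]
        refine Finset.sum_congr rfl fun n _ => ?_
        simp_rw [div_eq_mul_inv]
        rw [← Finset.sum_mul]; ring

/-- the anti-analytic summands -/
noncomputable def Hj (j : ℕ) (z : ℂ) : ℂ := (((1/2:ℝ) ^ j : ℝ) : ℂ) * (starRingEnd ℂ) (aeval z (qp ((4 ^ j) ^ 2)))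

lemma Hj_cont (j : ℕ) : Continuous (Hj j) := by
  have : Continuous fun z : ℂ => (starRingEnd ℂ) (aeval z (qp ((4 ^ j) ^ 2))) :=
    Complex.continuous_conj.comp (Polynomial.continuous_aeval _)
  unfold Hj; fun_prop

lemma Hj_norm (j : ℕ) (z : ℂ) : ‖Hj j z‖ = (1/2:ℝ) ^ j * ‖aeval z (qp ((4 ^ j) ^ 2))‖ := by
  rw [Hj, norm_mul, RCLike.norm_conj, Complex.norm_real, Real.norm_of_nonneg (by positivity)]

lemma Hj_pt (z : ℂ) (hz : z ∈ ball (0:ℂ) 1) : Summable fun j => Hj j z := by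
  have hz' : ‖z‖ < 1 := by simpa using hz
  refine Summable.of_norm_bounded (g := fun j => (1/2:ℝ) ^ j * (2 / (1 - ‖z‖))) (summable_geometric_two.mul_right _) fun j => ?_
  rw [Hj_norm]
  refine mul_le_mul_of_nonneg_left ?_ (by positivity)
  rw [le_div_iff₀ (by linarith)]
  exact qp_le _ z hz'

lemma Hj_int (j : ℕ) : ∫ z in ball (0:ℂ) 1, ‖Hj j z‖ ≤ (1/2:ℝ) ^ j * (2 * π) := by
  simp_rw [Hj_norm]
  rw [integral_const_mul]
  exact mul_le_mul_of_nonneg_left (qp_int _ (by positivity)) (by positivity)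

lemma test_sum (g : ℂ → ℂ) (hg : ContinuousOn g (ball (0:ℂ) 1)) (K : ℝ) (hK : ∀ z ∈ ball (0:ℂ) 1, ‖g z‖ ≤ K) :
    HasSum (fun j => ∫ z in ball (0:ℂ) 1, g z * Hj j z) (∫ z in ball (0:ℂ) 1, g z * ∑' j, Hj j z) := by
  have hK0 : 0 ≤ K := (norm_nonneg _).trans (hK 0 (by simp))
  have hae : ∀ᵐ z ∂(volume.restrict (ball (0:ℂ) 1)), ‖g z‖ ≤ K := by
    filter_upwards [ae_restrict_mem measurableSet_ball] with z hz using hK z hz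
  have hi : ∀ j, Integrable (fun z => g z * Hj j z) (volume.restrict (ball (0:ℂ) 1)) := fun j =>
    (int_ball (Hj_cont j)).bdd_mul (hg.aestronglyMeasurable measurableSet_ball) hae
  have := hasSum_integral_of_summable_integral_norm hi ?_
  · simpa only [tsum_mul_left] using this
  · refine Summable.of_nonneg_of_le (fun _ => integral_nonneg fun _ => norm_nonneg _) (fun j => ?_)
      (((summable_geometric_two.mul_right (2 * π))).mul_left K)
    refine le_trans ?_ (mul_le_mul_of_nonneg_left (Hj_int j) hK0)
    rw [← integral_const_mul]
    refine integral_mono_ae (hi j).norm ((int_ball (Hj_cont j)).norm.const_mul K) ?_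
    filter_upwards [hae] with z hz
    rw [norm_mul]; exact mul_le_mul_of_nonneg_right hz (norm_nonneg _)

/-- There is a complex measure `μ` on `𝔻` (written `dμ = h dν`) satisfying
`sup_{w∈𝔻} |∫_𝔻 (1-|w|²)/(1-w̄z)² dμ(z)| < ∞` which is not a Hankel measure. -/
theorem statement9 :
    ∃ (ν : Measure ℂ) (_ : IsFiniteMeasure ν) (h : ℂ → ℂ),
      (∀ᵐ z ∂ν, z ∈ Metric.ball (0 : ℂ) 1) ∧ Integrable h ν ∧
      (∃ C : ℝ, ∀ w ∈ Metric.ball (0 : ℂ) 1,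
        ‖∫ z, (((1 - ‖w‖ ^ 2 : ℝ) : ℂ) / (1 - (starRingEnd ℂ) w * z) ^ 2) * h z ∂ν‖ ≤ C) ∧
      ¬ IsHankelMeasure ν h := by
  have hfin : IsFiniteMeasure ((volume : Measure ℂ).restrict (ball (0:ℂ) 1)) :=
    isFiniteMeasure_restrict.2 measure_ball_lt_top.ne
  refine ⟨(volume : Measure ℂ).restrict (ball (0:ℂ) 1), hfin, fun z => ∑' j, Hj j z,
    ae_restrict_mem measurableSet_ball, ?_, ⟨∑' j : ℕ, (1/2:ℝ) ^ j * (4 * π), fun w hw => ?_⟩, ?_⟩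
  · refine integrable_tsum_aux (fun j => int_ball (Hj_cont j)) ?_ ?_
    · exact Summable.of_nonneg_of_le (fun _ => integral_nonneg fun _ => norm_nonneg _) Hj_int
        (summable_geometric_two.mul_right (2 * π))
    · filter_upwards [ae_restrict_mem measurableSet_ball] with z hz using Hj_pt z hz
  · have hw' : ‖w‖ < 1 := by simpa using hw
    have hlow : ∀ z ∈ ball (0:ℂ) 1, 1 - ‖w‖ ≤ ‖1 - (starRingEnd ℂ) w * z‖ := by
      intro z hz
      have hz' : ‖z‖ < 1 := by simpa using hz
      have h1 := norm_sub_norm_le (1:ℂ) ((starRingEnd ℂ) w * z)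
      rw [norm_one, norm_mul, RCLike.norm_conj] at h1
      nlinarith [norm_nonneg w]
    have hne : ∀ z ∈ ball (0:ℂ) 1, (1 - (starRingEnd ℂ) w * z) ^ 2 ≠ 0 := by
      intro z hz
      refine pow_ne_zero 2 (norm_pos_iff.1 ?_)
      linarith [hlow z hz]
    have hs := test_sum (fun z => ((1 - ‖w‖ ^ 2 : ℝ) : ℂ) / (1 - (starRingEnd ℂ) w * z) ^ 2)
      (ContinuousOn.div (by fun_prop) (by fun_prop) hne) (|1 - ‖w‖ ^ 2| / (1 - ‖w‖) ^ 2) (by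
        intro z hz
        rw [norm_div, norm_pow, Complex.norm_real, Real.norm_eq_abs]
        have := hlow z hz
        have : 0 < 1 - ‖w‖ := by linarith
        gcongr)
    rw [← hs.tsum_eq]
    refine tsum_of_norm_bounded (summable_geometric_two.mul_right (4 * π)).hasSum fun j => ?_
    have e : ∫ z in ball (0:ℂ) 1, ((1 - ‖w‖ ^ 2 : ℝ) : ℂ) / (1 - (starRingEnd ℂ) w * z) ^ 2 * Hj j z
       = (((1/2:ℝ) ^ j : ℝ) : ℂ) * (((π * (1 - ‖w‖ ^ 2) : ℝ) : ℂ) * (starRingEnd ℂ) (aeval w (qp ((4 ^ j) ^ 2)))) := by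
      rw [← repro _ w hw, ← integral_const_mul]
      congr 1; ext z; rw [Hj]; ring
    rw [e, norm_mul, norm_mul, RCLike.norm_conj, Complex.norm_real, Complex.norm_real, Real.norm_of_nonneg (by positivity)]
    refine mul_le_mul_of_nonneg_left ?_ (by positivity)
    have hq := qp_le ((4 ^ j) ^ 2) w hw'
    have h0 := norm_nonneg w
    rw [Real.norm_of_nonneg (mul_nonneg Real.pi_pos.le (by nlinarith))]
    have h3 : (1 + ‖w‖) * (‖aeval w (qp ((4 ^ j) ^ 2))‖ * (1 - ‖w‖)) ≤ 2 * 2 := by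
      refine mul_le_mul (by linarith) hq (mul_nonneg (norm_nonneg _) (by linarith)) (by norm_num)
    calc _ = π * ((1 + ‖w‖) * (‖aeval w (qp ((4 ^ j) ^ 2))‖ * (1 - ‖w‖))) := by ring
      _ ≤ π * (2 * 2) := mul_le_mul_of_nonneg_left h3 Real.pi_pos.le
      _ = 4 * π := by ring
  · rintro ⟨C, hC⟩
    have main : ∀ J : ℕ, 2 ^ J * π / 3 ≤ C * 4 := by
      intro J
      set s : ℕ := 4 ^ J with hs
      have hspos : 0 < s := by positivity
      set p := fp s with hp
      have h1 := hC (fun z => aeval z p) (Polynomial.differentiable_aeval p).differentiableOn 4 (by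
        intro r hr
        refine (circ p (p.natDegree + (phi (s^2) * Fp (s^2)).natDegree + 1) (by omega) r hr).trans ?_
        exact fp_sq s _ hspos (by omega))
      refine le_trans ?_ h1
      have hcontg : Continuous fun z : ℂ => (aeval z p) ^ 2 := (Polynomial.continuous_aeval p).pow 2
      obtain ⟨K, hK⟩ := (isCompact_closedBall (0:ℂ) 1).exists_bound_of_continuousOn hcontg.continuousOn
      have h2 := test_sum (fun z => (aeval z p) ^ 2) hcontg.continuousOn K (fun z hz => hK z (ball_subset_closedBall hz))
      have e : ∀ j D, (p ^ 2).natDegree < D → (qp ((4 ^ j) ^ 2)).natDegree < D → ∫ z in ball (0:ℂ) 1, (aeval z p) ^ 2 * Hj j z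
         = (((1/2:ℝ) ^ j * ∑ n ∈ Finset.range D, (p ^ 2).coeff n * (qp ((4 ^ j) ^ 2)).coeff n * (π / (n + 1)) : ℝ) : ℂ) := by
        intro j D h1 h2
        rw [Complex.ofReal_mul, ← pair _ _ D h1 h2, ← integral_const_mul]
        congr 1; ext z; rw [Hj, map_pow]; ring
      have h3 := Complex.hasSum_re h2
      have hpos : ∀ j, 0 ≤ (∫ z in ball (0:ℂ) 1, (aeval z p) ^ 2 * Hj j z).re := by
        intro j
        rw [e j ((p ^ 2).natDegree + (qp ((4 ^ j) ^ 2)).natDegree + 1) (by omega) (by omega), Complex.ofReal_re]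
        refine mul_nonneg (by positivity) (Finset.sum_nonneg fun n _ => ?_)
        exact mul_nonneg (mul_nonneg ((NN_fp s).pow n) (NN_qp _ n)) (by positivity)
      have h4 := le_hasSum h3 J fun j _ => hpos j
      refine le_trans ?_ (h4.trans (Complex.re_le_norm _))
      set D := (p ^ 2).natDegree + (qp ((4 ^ J) ^ 2)).natDegree + 1 + ∑ k ∈ Finset.range (s ^ 2), (ak (s^2) k + 2 * s ^ 2) with hDdef
      rw [e J D (by omega) (by omega), Complex.ofReal_re]
      have h5 := fq_low s D hspos (by
        intro k hk
        have := Finset.single_le_sum (f := fun k => ak (s^2) k + 2 * s ^ 2) (fun _ _ => Nat.zero_le _) (Finset.mem_range.2 hk)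
        beta_reduce at this
        omega)
      refine le_trans (le_of_eq ?_) (mul_le_mul_of_nonneg_left h5 (by positivity))
      have : ((1:ℝ)/2) ^ J * (4:ℝ) ^ J = 2 ^ J := by rw [← mul_pow]; norm_num
      rw [hs]; push_cast
      rw [← this]; ring
    obtain ⟨J, hJ⟩ := pow_unbounded_of_one_lt (C * 4) (one_lt_two : (1:ℝ) < 2)
    have := main J
    have h3 : (0:ℝ) < 2 ^ J := by positivity
    nlinarith [Real.pi_gt_three]
end

section
/- Let 0 < p < ∞ and let f(z) = ∑_{n=0}^∞ a_n z^n where (a_n) is a nonincreasing sequence of nonnegative real numbers. Then f belongs to the space Q_p if and only if a_n = O(1/n). -/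
open MeasureTheory Complex Metric

/-- `f` belongs to the space `Q_p`: `f` is analytic on `𝔻` and
`sup_{a∈𝔻} ∫_𝔻 |f'(z)|² (1-|σ_a(z)|²)^p dA(z) < ∞`, where `σ_a(z) = (a-z)/(1-āz)`. -/
def MemQp (p : ℝ) (f : ℂ → ℂ) : Prop :=
  DifferentiableOn ℂ f (Metric.ball 0 1) ∧
    ∃ C : ℝ, ∀ a ∈ Metric.ball (0 : ℂ) 1,
      (∫⁻ z in Metric.ball (0 : ℂ) 1,
          ENNReal.ofReal (‖deriv f z‖ ^ 2 *
            (1 - ‖(a - z) / (1 - (starRingEnd ℂ) a * z)‖ ^ 2) ^ p)) ≤ ENNReal.ofReal C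

theorem qp_hasSum (a : ℕ → ℝ) (hmono : Antitone a) (hpos : ∀ n, 0 ≤ a n) :
    DifferentiableOn ℂ (fun z : ℂ => ∑' n : ℕ, (a n : ℂ) * z ^ n) (ball 0 1) ∧
    ∀ z : ℂ, ‖z‖ < 1 → HasSum (fun n : ℕ => ((n * a n : ℝ) : ℂ) * z ^ (n - 1))
      (deriv (fun z : ℂ => ∑' n : ℕ, (a n : ℂ) * z ^ n) z) := by
  have key : ∀ z : ℂ, ‖z‖ < 1 →
      DifferentiableAt ℂ (fun z : ℂ => ∑' n : ℕ, (a n : ℂ) * z ^ n) z ∧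
      HasSum (fun n : ℕ => ((n * a n : ℝ) : ℂ) * z ^ (n - 1))
      (deriv (fun z : ℂ => ∑' n : ℕ, (a n : ℂ) * z ^ n) z) := by
    intro z hz
    obtain ⟨ρ, h1, h2⟩ := exists_between hz
    have hρ : 0 ≤ ρ := (norm_nonneg z).trans h1.le
    have hu : Summable (fun n : ℕ => a 0 * ρ ^ n) :=
      (summable_geometric_of_lt_one hρ h2).mul_left _
    have hd : ∀ i : ℕ, DifferentiableOn ℂ (fun z : ℂ => (a i : ℂ) * z ^ i) (ball 0 ρ) := by
      intro i; fun_prop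
    have hb : ∀ (i : ℕ) (w : ℂ), w ∈ ball (0 : ℂ) ρ → ‖(a i : ℂ) * w ^ i‖ ≤ a 0 * ρ ^ i := by
      intro i w hw
      rw [mem_ball_zero_iff] at hw
      rw [norm_mul, norm_pow, Complex.norm_real, Real.norm_of_nonneg (hpos i)]
      have := hmono (Nat.zero_le i)
      have := hpos 0
      gcongr
    have hzb : z ∈ ball (0 : ℂ) ρ := by simpa using h1
    refine ⟨(differentiableOn_tsum_of_summable_norm hu hd isOpen_ball hb).differentiableAt
      (isOpen_ball.mem_nhds hzb), ?_⟩
    have := hasSum_deriv_of_summable_norm hu hd isOpen_ball hb hzb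
    have e : ∀ n : ℕ, deriv (fun z : ℂ => (a n : ℂ) * z ^ n) z =
        ((n * a n : ℝ) : ℂ) * z ^ (n - 1) := by
      intro n
      simp
      ring
    simpa only [e] using this
  exact ⟨fun z hz => (key z (by simpa using hz)).1.differentiableWithinAt, fun z hz => (key z hz).2⟩

theorem qp_pow_bound (ε t : ℝ) (h0 : 0 < ε) (h1 : ε ≤ 1) (ht : 0 < t) (ht1 : t ≤ 1) (n : ℕ) :
    (n : ℝ) ^ ε * (1 - t) ^ n ≤ t ^ (-ε) := by
  have hn : (0 : ℝ) ≤ n := n.cast_nonneg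
  have e1 : ((n : ℝ) * t) ^ ε ≤ 1 + n * t := by
    have hb : 0 ≤ (n : ℝ) * t := by positivity
    calc ((n : ℝ) * t) ^ ε ≤ (1 + n * t) ^ ε := by gcongr; linarith
      _ ≤ (1 + n * t) ^ (1 : ℝ) := Real.rpow_le_rpow_of_exponent_le (by linarith) h1
      _ = _ := Real.rpow_one _
  have e2 : (1 + n * t) * (1 - t) ^ n ≤ 1 := by
    calc (1 + n * t) * (1 - t) ^ n ≤ (1 + t) ^ n * (1 - t) ^ n := by
          gcongr
          · exact one_add_mul_le_pow (by linarith) n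
      _ = (1 - t ^ 2) ^ n := by rw [← mul_pow]; ring_nf
      _ ≤ 1 := pow_le_one₀ (by nlinarith) (by nlinarith)
  rw [Real.rpow_neg ht.le, ← one_div, le_div_iff₀ (by positivity)]
  calc (n : ℝ) ^ ε * (1 - t) ^ n * t ^ ε = ((n : ℝ) * t) ^ ε * (1 - t) ^ n := by
        rw [Real.mul_rpow hn ht.le]; ring
    _ ≤ (1 + n * t) * (1 - t) ^ n := by gcongr
    _ ≤ 1 := e2

theorem qp_tele (a : ℕ → ℝ) (hmono : Antitone a) (hpos : ∀ n, 0 ≤ a n) (C : ℝ)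
    (hC : ∀ n : ℕ, (n : ℝ) * a n ≤ C) (ε : ℝ) (h0 : 0 < ε) (h1 : ε ≤ 1) (n : ℕ) (hn : 1 ≤ n) :
    |((n + 1 : ℕ) : ℝ) * a (n + 1) - n * a n| ≤
      (n : ℝ) ^ ε * ((n : ℝ) ^ (-ε) * (n * a n + 2 * C / ε) -
       ((n + 1 : ℕ) : ℝ) ^ (-ε) * (((n + 1 : ℕ) : ℝ) * a (n + 1) + 2 * C / ε)) := by
  have hn' : (0 : ℝ) < n := by exact_mod_cast hn
  have hm := hmono (Nat.le_succ n)
  have hp := hpos (n + 1)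
  have hCn := hC (n + 1)
  have hC0 : 0 ≤ C := by simpa using hC 0
  have ew : ((n : ℝ) ^ ε * (n : ℝ) ^ (-ε)) = 1 := by
    rw [← Real.rpow_add hn']; simp
  set x : ℝ := (n : ℝ) ^ ε * ((n + 1 : ℕ) : ℝ) ^ (-ε) with hx
  have hx0 : 0 ≤ x := by positivity
  have hx1 : x ≤ 1 - ε / (n + 1) := by
    have : x = (1 + (-(1 / ((n : ℝ) + 1)))) ^ ε := by
      have e : (1 + (-(1 / ((n : ℝ) + 1)))) = n / (n + 1) := by field_simp; ring
      rw [e, Real.div_rpow hn'.le (by positivity), hx, Real.rpow_neg (by positivity)]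
      push_cast; rfl
    rw [this]
    have := _root_.rpow_one_add_le_one_add_mul_self (s := -(1 / ((n : ℝ) + 1))) (p := ε)
      (by rw [neg_le_neg_iff, div_le_one (by positivity)]; linarith) h0.le h1
    refine this.trans (le_of_eq ?_)
    ring
  have hE : (n : ℝ) ^ ε * ((n : ℝ) ^ (-ε) * (n * a n + 2 * C / ε) -
       ((n + 1 : ℕ) : ℝ) ^ (-ε) * (((n + 1 : ℕ) : ℝ) * a (n + 1) + 2 * C / ε))
       = (n * a n + 2 * C / ε) - x * (((n + 1 : ℕ) : ℝ) * a (n + 1) + 2 * C / ε) := by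
    rw [mul_sub, ← mul_assoc, ← mul_assoc, ew, one_mul]
  rw [hE]
  have hx1' : x ≤ 1 := hx1.trans (by have : 0 ≤ ε / ((n : ℝ) + 1) := by positivity
                                     linarith)
  push_cast at hCn ⊢
  have k1 : x * (((n : ℝ) + 1) * a (n + 1)) ≤ ((n : ℝ) + 1) * a (n + 1) :=
    mul_le_of_le_one_left (by positivity) hx1'
  have k2 : 2 * a (n + 1) ≤ (1 - x) * (2 * C / ε) := by
    calc 2 * a (n + 1) ≤ 2 * (C / (n + 1)) := by
          gcongr; rw [le_div_iff₀ (by positivity)]; linarith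
      _ = ε / (n + 1) * (2 * C / ε) := by field_simp
      _ ≤ _ := by gcongr; linarith
  have k3 : 0 ≤ (n : ℝ) * (a n - a (n + 1)) := mul_nonneg hn'.le (by linarith)
  rw [abs_le]
  constructor <;> nlinarith

theorem qp_abel (b : ℕ → ℂ) (z : ℂ) (N k : ℕ) :
    (1 - z) * ∑ n ∈ Finset.Ico (N + 1) (N + 1 + k), b n * z ^ (n - 1) =
      b (N + 1) * z ^ N - b (N + 1 + k) * z ^ (N + k) +
        ∑ n ∈ Finset.Ico (N + 1) (N + 1 + k), (b (n + 1) - b n) * z ^ n := by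
  induction k with
  | zero => simp
  | succ k ih =>
    rw [← add_assoc, Finset.sum_Ico_succ_top (by omega), Finset.sum_Ico_succ_top (by omega),
      mul_add, ih]
    have : N + 1 + k - 1 = N + k := by omega
    rw [this]
    ring

theorem qp_pointwise (a : ℕ → ℝ) (hmono : Antitone a) (hpos : ∀ n, 0 ≤ a n) (C : ℝ)
    (hC : ∀ n : ℕ, (n : ℝ) * a n ≤ C) (ε : ℝ) (h0 : 0 < ε) (h1 : ε ≤ 1) (z : ℂ) (hz : ‖z‖ < 1) :
    ‖deriv (fun z : ℂ => ∑' n : ℕ, (a n : ℂ) * z ^ n) z‖ ≤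
      (6 * C + 2 * C / ε) * (‖1 - z‖⁻¹ * (‖1 - z‖ / (1 - ‖z‖)) ^ ε) := by
  have hs := ((qp_hasSum a hmono hpos).2 z hz).tendsto_sum_nat
  set u := ‖1 - z‖ with hu
  set t := 1 - ‖z‖ with ht
  have ht0 : 0 < t := by rw [ht]; linarith
  have ht1 : t ≤ 1 := by rw [ht]; linarith [norm_nonneg z]
  have htu : t ≤ u := by
    have := norm_sub_norm_le (1 : ℂ) z
    rw [norm_one] at this
    exact this
  have hu0 : 0 < u := ht0.trans_le htu
  have hu2 : u ≤ 2 := by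
    have := norm_sub_le (1 : ℂ) z
    rw [norm_one] at this; linarith
  have hC0 : 0 ≤ C := by simpa using hC 0
  have hb0 : ∀ n : ℕ, 0 ≤ (n : ℝ) * a n := fun n => mul_nonneg n.cast_nonneg (hpos n)
  have hrt : ‖z‖ = 1 - t := by rw [ht]; ring
  have hut : 1 ≤ (u / t) ^ ε := Real.one_le_rpow (by rwa [one_le_div ht0]) h0.le
  set N := ⌊1 / u⌋₊ with hN
  have hN1 : (N : ℝ) ≤ 1 / u := Nat.floor_le (by positivity)
  have hN2 : 1 / u < N + 1 := Nat.lt_floor_add_one _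
  have hNu : ((N + 1 : ℕ) : ℝ) ≤ 3 / u := by
    push_cast
    have : 1 ≤ 2 / u := by rwa [one_le_div hu0]
    calc (N : ℝ) + 1 ≤ 1 / u + 2 / u := by linarith
      _ = 3 / u := by ring
  set G : ℕ → ℝ := fun n => (n : ℝ) ^ (-ε) * (n * a n + 2 * C / ε) with hG
  have hzn : ∀ n : ℕ, ‖z‖ ^ n ≤ 1 := fun n => pow_le_one₀ (norm_nonneg z) hz.le
  refine le_of_tendsto ((hs.comp (Filter.tendsto_add_atTop_nat (N + 1))).norm)
    (Filter.Eventually.of_forall fun k => ?_)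
  simp only [Function.comp]
  rw [add_comm k, ← Finset.sum_range_add_sum_Ico _ (Nat.le_add_right (N + 1) k)]
  have head : ‖∑ n ∈ Finset.range (N + 1), ((n * a n : ℝ) : ℂ) * z ^ (n - 1)‖ ≤ 3 * C / u := by
    calc _ ≤ ∑ n ∈ Finset.range (N + 1), C := by
          refine norm_sum_le_of_le _ fun n _ => ?_
          rw [norm_mul, norm_pow, Complex.norm_real, Real.norm_of_nonneg (hb0 n)]
          exact (mul_le_of_le_one_right (hb0 n) (hzn _)).trans (hC n)
      _ = ((N + 1 : ℕ) : ℝ) * C := by simp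
      _ ≤ 3 / u * C := by gcongr
      _ = _ := by ring
  have tail : ‖∑ n ∈ Finset.Ico (N + 1) (N + 1 + k), ((n * a n : ℝ) : ℂ) * z ^ (n - 1)‖ ≤
      u⁻¹ * (2 * C + (u / t) ^ ε * (C + 2 * C / ε)) := by
    rw [← div_eq_inv_mul, le_div_iff₀ hu0, mul_comm, hu, ← norm_mul,
      qp_abel (fun n => ((n * a n : ℝ) : ℂ))]
    have i1 : ∀ n m : ℕ, ‖((n * a n : ℝ) : ℂ) * z ^ m‖ ≤ C := by
      intro n m
      rw [norm_mul, norm_pow, Complex.norm_real, Real.norm_of_nonneg (hb0 n)]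
      exact (mul_le_of_le_one_right (hb0 n) (hzn _)).trans (hC n)
    have i2 : ‖∑ n ∈ Finset.Ico (N + 1) (N + 1 + k),
        ((((n + 1 : ℕ) * a (n + 1) : ℝ) : ℂ) - ((n * a n : ℝ) : ℂ)) * z ^ n‖ ≤
        (u / t) ^ ε * (C + 2 * C / ε) := by
      calc _ ≤ ∑ n ∈ Finset.Ico (N + 1) (N + 1 + k), t ^ (-ε) * (G n - G (n + 1)) := by
            refine norm_sum_le_of_le _ fun n hn => ?_
            have hn1 : 1 ≤ n := by
              have := (Finset.mem_Ico.1 hn).1; omega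
            have hn' : (0 : ℝ) < n := by exact_mod_cast hn1
            rw [← Complex.ofReal_sub, norm_mul, norm_pow, Complex.norm_real, Real.norm_eq_abs, hrt]
            have l1 := qp_tele a hmono hpos C hC ε h0 h1 n hn1
            have l2 := qp_pow_bound ε t h0 h1 ht0 ht1 n
            have l3 : 0 ≤ G n - G (n + 1) := by
              have := (abs_nonneg _).trans l1
              exact nonneg_of_mul_nonneg_right this (by positivity)
            calc _ ≤ ((n : ℝ) ^ ε * (G n - G (n + 1))) * (1 - t) ^ n :=
                  mul_le_mul_of_nonneg_right l1 (pow_nonneg (by linarith) _)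
              _ = ((n : ℝ) ^ ε * (1 - t) ^ n) * (G n - G (n + 1)) := by ring
              _ ≤ _ := mul_le_mul_of_nonneg_right l2 l3
        _ = t ^ (-ε) * (G (N + 1) - G (N + 1 + k)) := by
            rw [← Finset.mul_sum]
            congr 1
            have := Finset.sum_Ico_sub G (Nat.le_add_right (N + 1) k)
            rw [← neg_sub (G (N + 1 + k)), ← this, ← Finset.sum_neg_distrib]
            exact Finset.sum_congr rfl fun i _ => by ring
        _ ≤ t ^ (-ε) * (u ^ ε * (C + 2 * C / ε)) := by
            have g1 : 0 ≤ G (N + 1 + k) :=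
              mul_nonneg (by positivity) (add_nonneg (hb0 _) (by positivity))
            have g2 : G (N + 1) ≤ u ^ ε * (C + 2 * C / ε) := by
              have : ((N + 1 : ℕ) : ℝ) ^ (-ε) ≤ u ^ ε := by
                have e : u ^ ε = (1 / u) ^ (-ε) := by
                  rw [one_div, Real.inv_rpow hu0.le, Real.rpow_neg hu0.le, inv_inv]
                rw [e]
                refine Real.rpow_le_rpow_of_nonpos (by positivity) ?_ (by linarith)
                push_cast; exact hN2.le
              exact mul_le_mul this (by linarith [hC (N + 1)])
                (add_nonneg (hb0 _) (by positivity)) (by positivity)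
            gcongr
            linarith
        _ = _ := by
            rw [Real.div_rpow hu0.le ht0.le, Real.rpow_neg ht0.le]; ring
    calc _ ≤ C + C + (u / t) ^ ε * (C + 2 * C / ε) := by
          refine (norm_add_le _ _).trans (add_le_add ((norm_sub_le _ _).trans ?_) i2)
          exact add_le_add (i1 _ _) (i1 _ _)
      _ = _ := by ring
  refine (norm_add_le _ _).trans ((add_le_add head tail).trans ?_)
  have : 5 * C * u⁻¹ * 1 ≤ 5 * C * u⁻¹ * (u / t) ^ ε := by gcongr
  calc _ = 5 * C * u⁻¹ * 1 + u⁻¹ * (u / t) ^ ε * (C + 2 * C / ε) := by ring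
    _ ≤ 5 * C * u⁻¹ * (u / t) ^ ε + u⁻¹ * (u / t) ^ ε * (C + 2 * C / ε) := by linarith
    _ = _ := by ring

noncomputable def qpPhi (q s : ℝ) : ℝ := min (s ^ (q - 2)) (s ^ (-q - 2))

theorem qpPhi_nonneg (q s : ℝ) (hs : 0 ≤ s) : 0 ≤ qpPhi q s :=
  le_min (Real.rpow_nonneg hs _) (Real.rpow_nonneg hs _)

theorem qpPhi_measurable (q : ℝ) : Measurable (qpPhi q) := by
  unfold qpPhi
  fun_prop

theorem qpPhi_integrable (q : ℝ) (hq : 0 < q) :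
    Integrable (fun z : ℂ => qpPhi q ‖z‖) volume := by
  rw [integrable_fun_norm_addHaar (volume : Measure ℂ) (f := qpPhi q)]
  rw [Complex.finrank_real_complex]
  have hm : Measurable fun y : ℝ => y ^ (2 - 1) • qpPhi q y := by
    have := qpPhi_measurable q
    fun_prop
  rw [← Set.Ioc_union_Ioi_eq_Ioi (zero_le_one' ℝ), integrableOn_union]
  constructor
  · have : IntegrableOn (fun y : ℝ => y ^ (q - 1)) (Set.Ioc 0 1) :=
      (intervalIntegral.intervalIntegrable_rpow' (by linarith)).1
    refine Integrable.mono' this hm.aestronglyMeasurable ?_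
    filter_upwards [ae_restrict_mem measurableSet_Ioc] with y hy
    have hy0 : 0 < y := hy.1
    rw [Real.norm_of_nonneg (smul_nonneg (by positivity) (qpPhi_nonneg q y hy0.le))]
    have e : y ^ (q - 1) = y * y ^ (q - 2) := by
      rw [mul_comm, ← Real.rpow_add_one hy0.ne']; congr 1; ring
    rw [e]
    simp only [Nat.add_one_sub_one, pow_one, smul_eq_mul]
    exact mul_le_mul_of_nonneg_left (min_le_left _ _) hy0.le
  · have : IntegrableOn (fun y : ℝ => y ^ (-q - 1)) (Set.Ioi 1) :=
      integrableOn_Ioi_rpow_of_lt (by linarith) one_pos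
    refine Integrable.mono' this hm.aestronglyMeasurable ?_
    filter_upwards [ae_restrict_mem measurableSet_Ioi] with y hy
    have hy0 : 0 < y := one_pos.trans hy
    rw [Real.norm_of_nonneg (smul_nonneg (by positivity) (qpPhi_nonneg q y hy0.le))]
    have e : y ^ (-q - 1) = y * y ^ (-q - 2) := by
      rw [mul_comm, ← Real.rpow_add_one hy0.ne']; congr 1; ring
    rw [e]
    simp only [Nat.add_one_sub_one, pow_one, smul_eq_mul]
    exact mul_le_mul_of_nonneg_left (min_le_right _ _) hy0.le

theorem qpPhi_scale (q δ : ℝ) (hδ : 0 < δ) (c : ℂ) :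
    ∫⁻ z : ℂ, ENNReal.ofReal ((δ ^ 2)⁻¹ * qpPhi q (‖z - c‖ / δ)) =
      ∫⁻ z : ℂ, ENNReal.ofReal (qpPhi q ‖z‖) := by
  have hm : Measurable fun z : ℂ => ENNReal.ofReal (qpPhi q ‖z‖) :=
    ((qpPhi_measurable q).comp measurable_norm).ennreal_ofReal
  rw [lintegral_sub_right_eq_self (fun z : ℂ => ENNReal.ofReal ((δ ^ 2)⁻¹ * qpPhi q (‖z‖ / δ))) c]
  have h1 : ∀ z : ℂ, ENNReal.ofReal ((δ ^ 2)⁻¹ * qpPhi q (‖z‖ / δ)) =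
      ENNReal.ofReal ((δ ^ 2)⁻¹) * ENNReal.ofReal (qpPhi q ‖δ⁻¹ • z‖) := by
    intro z
    rw [ENNReal.ofReal_mul (by positivity), norm_smul, norm_inv, Real.norm_of_nonneg hδ.le,
      div_eq_inv_mul]
  simp_rw [h1]
  rw [lintegral_const_mul _ (by
    exact hm.comp (measurable_const_smul δ⁻¹))]
  rw [← lintegral_map hm (measurable_const_smul δ⁻¹),
    Measure.map_addHaar_smul volume (inv_ne_zero hδ.ne'), lintegral_smul_measure,
    Complex.finrank_real_complex, smul_eq_mul, ← mul_assoc, ← ENNReal.ofReal_mul (by positivity)]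
  have : (δ ^ 2)⁻¹ * |((δ⁻¹) ^ 2)⁻¹| = 1 := by
    rw [abs_of_pos (by positivity)]; field_simp
  rw [this]; simp

theorem qp_key (q T U V S : ℝ) (hq : 0 < q) (hq1 : q ≤ 1) (hT : 0 < T) (hU : 0 < U) (hS : 0 < S)
    (hTU : T ≤ U) (hTV : T ≤ V) (hV : 1 ≤ V) (hSV : S ≤ V) :
    (U⁻¹ * (U / T) ^ (q / 4)) ^ 2 * (T / V ^ 2) ^ q ≤ qpPhi q U + qpPhi q S := by
  have hV0 : 0 < V := by linarith
  have e : (U⁻¹ * (U / T) ^ (q / 4)) ^ 2 * (T / V ^ 2) ^ q =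
      U ^ (q / 2 - 2) * T ^ (q / 2) * V ^ (-(2 * q)) := by
    rw [Real.div_rpow hU.le hT.le, Real.div_rpow hT.le (by positivity), ← Real.rpow_natCast V 2,
      ← Real.rpow_mul hV0.le, mul_pow, div_pow, ← Real.rpow_natCast (U ^ _) 2,
      ← Real.rpow_natCast (T ^ _) 2, ← Real.rpow_mul hU.le, ← Real.rpow_mul hT.le,
      Real.rpow_neg hV0.le, Real.rpow_sub hU]
    have : T ^ q = T ^ (q / 2) * T ^ (q / 2) := by rw [← Real.rpow_add hT]; ring_nf
    rw [this]
    have e1 : q / 4 * (2 : ℕ) = q / 2 := by push_cast; ring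
    rw [e1]
    have hT' : 0 < T ^ (q / 2) := by positivity
    norm_num
    field_simp
  rw [e]
  have p1 := qpPhi_nonneg q U hU.le
  have p2 := qpPhi_nonneg q S hS.le
  rcases le_total U V with h | h
  · have hb : U ^ (q / 2 - 2) * T ^ (q / 2) ≤ U ^ (q - 2) := by
      calc _ ≤ U ^ (q / 2 - 2) * U ^ (q / 2) := by gcongr
        _ = _ := by rw [← Real.rpow_add hU]; ring_nf
    have : U ^ (q / 2 - 2) * T ^ (q / 2) * V ^ (-(2 * q)) ≤ qpPhi q U := by
      refine le_min ?_ ?_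
      · have : V ^ (-(2 * q)) ≤ 1 := Real.rpow_le_one_of_one_le_of_nonpos hV (by linarith)
        exact (mul_le_of_le_one_right (by positivity) this).trans hb
      · calc _ ≤ U ^ (q - 2) * U ^ (-(2 * q)) :=
              mul_le_mul hb (Real.rpow_le_rpow_of_nonpos hU h (by linarith)) (by positivity)
                (by positivity)
          _ = _ := by rw [← Real.rpow_add hU]; ring_nf
    linarith
  · have hb : U ^ (q / 2 - 2) * T ^ (q / 2) * V ^ (-(2 * q)) ≤ V ^ (-q - 2) := by
      calc _ ≤ V ^ (q / 2 - 2) * V ^ (q / 2) * V ^ (-(2 * q)) := by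
            have := Real.rpow_le_rpow_of_nonpos (z := q / 2 - 2) hV0 h (by linarith)
            gcongr
        _ = _ := by rw [← Real.rpow_add hV0, ← Real.rpow_add hV0]; ring_nf
    have : V ^ (-q - 2) ≤ qpPhi q S := by
      refine le_min ?_ ?_
      · exact (Real.rpow_le_rpow_of_exponent_le hV (by linarith)).trans
          (Real.rpow_le_rpow_of_nonpos hS hSV (by linarith))
      · exact Real.rpow_le_rpow_of_nonpos hS hSV (by linarith)
    linarith

theorem qp_sigma (a z : ℂ) (h : 1 - (starRingEnd ℂ) a * z ≠ 0) :
    1 - ‖(a - z) / (1 - (starRingEnd ℂ) a * z)‖ ^ 2 =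
      (1 - ‖a‖ ^ 2) * (1 - ‖z‖ ^ 2) / ‖1 - (starRingEnd ℂ) a * z‖ ^ 2 := by
  have h' : ‖1 - (starRingEnd ℂ) a * z‖ ^ 2 ≠ 0 := by simpa using h
  rw [norm_div, div_pow, eq_div_iff h', sub_mul, div_mul_cancel₀ _ h', one_mul]
  simp only [← Complex.normSq_eq_norm_sq, Complex.normSq_apply]
  simp
  ring

theorem qp_one_sub (a z : ℂ) (hz : ‖z‖ ≤ 1) :
    1 - ‖a‖ ≤ ‖1 - (starRingEnd ℂ) a * z‖ := by
  have := norm_sub_norm_le (1 : ℂ) ((starRingEnd ℂ) a * z)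
  rw [norm_mul, RCLike.norm_conj, norm_one] at this
  have := mul_le_of_le_one_right (norm_nonneg a) hz
  linarith

theorem qp_one_sub' (a z : ℂ) (ha : ‖a‖ ≤ 1) :
    1 - ‖z‖ ≤ ‖1 - (starRingEnd ℂ) a * z‖ := by
  have := norm_sub_norm_le (1 : ℂ) ((starRingEnd ℂ) a * z)
  rw [norm_mul, RCLike.norm_conj, norm_one] at this
  have := mul_le_of_le_one_left (norm_nonneg z) ha
  linarith

theorem qp_mean (h : ℂ → ℂ) (hm : Measurable h) (R : ℝ)
    (hd : DifferentiableOn ℂ h (ball 0 R)) :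
    volume (ball (0 : ℂ) R) * ‖h 0‖ₑ ≤ ∫⁻ w in ball (0 : ℂ) R, ‖h w‖ₑ := by
  have hpi : (0 : ℝ) ≤ 2 * Real.pi := by positivity
  -- mean value on circles
  have circ : ∀ w ∈ ball (0 : ℂ) R, ENNReal.ofReal (2 * Real.pi) * ‖h 0‖ₑ ≤
      ∫⁻ θ in Set.Ioc 0 (2 * Real.pi), ‖h (circleMap 0 1 θ * w)‖ₑ := by
    intro w hw
    rw [mem_ball_zero_iff] at hw
    have hk : DifferentiableOn ℂ (fun ζ : ℂ => h (ζ * w)) (closedBall 0 1) := by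
      refine hd.comp (by fun_prop) ?_
      intro ζ hζ
      rw [mem_closedBall_zero_iff] at hζ
      rw [mem_ball_zero_iff, norm_mul]
      exact (mul_le_of_le_one_left (norm_nonneg w) hζ).trans_lt hw
    have hk' : DiffContOnCl ℂ (fun ζ : ℂ => h (ζ * w)) (ball 0 |1|) := by
      rw [abs_one]
      refine DifferentiableOn.diffContOnCl ?_
      rwa [closure_ball _ one_ne_zero]
    have e := hk'.circleAverage
    rw [Real.circleAverage_def] at e
    simp only [zero_mul] at e
    have e2 : ENNReal.ofReal (2 * Real.pi) * ‖h 0‖ₑ =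
        ‖∫ θ in (0 : ℝ)..2 * Real.pi, h (circleMap 0 1 θ * w)‖ₑ := by
      rw [← e, enorm_smul, ← mul_assoc, Real.enorm_eq_ofReal (by positivity),
        ← ENNReal.ofReal_mul hpi, mul_inv_cancel₀ (by positivity)]
      simp
    rw [e2, intervalIntegral.integral_of_le hpi]
    exact enorm_integral_le_lintegral_enorm _
  -- rotation invariance
  have rot : ∀ θ : ℝ, ∫⁻ w in ball (0 : ℂ) R, ‖h (circleMap 0 1 θ * w)‖ₑ =
      ∫⁻ w in ball (0 : ℂ) R, ‖h w‖ₑ := by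
    intro θ
    have hmp := (rotation (Circle.exp θ)).measurePreserving
    have hpre : (rotation (Circle.exp θ)) ⁻¹' (ball (0 : ℂ) R) = ball 0 R := by
      ext w
      rw [Set.mem_preimage, mem_ball_zero_iff, mem_ball_zero_iff, LinearIsometryEquiv.norm_map]
    have := hmp.setLIntegral_comp_preimage_emb
      (rotation (Circle.exp θ)).toHomeomorph.measurableEmbedding (fun w => ‖h w‖ₑ) (ball 0 R)
    rw [hpre] at this
    rw [← this]
    simp [circleMap, Circle.coe_exp]
  have hpos : ENNReal.ofReal (2 * Real.pi) ≠ 0 := by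
    simp [Real.pi_pos]
  rw [← ENNReal.mul_le_mul_iff_right hpos ENNReal.ofReal_ne_top]
  calc ENNReal.ofReal (2 * Real.pi) * (volume (ball (0 : ℂ) R) * ‖h 0‖ₑ)
      = ∫⁻ w in ball (0 : ℂ) R, ENNReal.ofReal (2 * Real.pi) * ‖h 0‖ₑ := by
        rw [lintegral_const, Measure.restrict_apply MeasurableSet.univ, Set.univ_inter]; ring
    _ ≤ ∫⁻ w in ball (0 : ℂ) R, ∫⁻ θ in Set.Ioc 0 (2 * Real.pi), ‖h (circleMap 0 1 θ * w)‖ₑ :=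
        setLIntegral_mono' measurableSet_ball circ
    _ = ∫⁻ θ in Set.Ioc 0 (2 * Real.pi), ∫⁻ w in ball (0 : ℂ) R, ‖h (circleMap 0 1 θ * w)‖ₑ := by
        refine lintegral_lintegral_swap ?_
        refine Measurable.aemeasurable ?_
        have : Measurable fun x : ℂ × ℝ => circleMap 0 1 x.2 * x.1 := by
          have : Continuous fun x : ℂ × ℝ => circleMap 0 1 x.2 * x.1 := by fun_prop
          exact this.measurable
        exact (hm.comp this).enorm
    _ = ENNReal.ofReal (2 * Real.pi) * ∫⁻ w in ball (0 : ℂ) R, ‖h w‖ₑ := by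
        simp_rw [rot]
        rw [lintegral_const, Measure.restrict_apply MeasurableSet.univ, Set.univ_inter,
          Real.volume_Ioc, sub_zero, mul_comm]

theorem qp_weight (x R : ℝ) (hR : 0 < R) (hR4 : R ≤ 1 / 4) (hx : x = 1 - 2 * R) (z : ℂ)
    (hz : z ∈ ball (x : ℂ) R) :
    2 / 25 ≤ 1 - ‖((x : ℂ) - z) / (1 - (starRingEnd ℂ) (x : ℂ) * z)‖ ^ 2 := by
  have hx0 : 0 ≤ x := by linarith
  have hnx : ‖(x : ℂ)‖ = x := by rw [Complex.norm_real, Real.norm_of_nonneg hx0]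
  rw [mem_ball, dist_eq_norm] at hz
  have hzn : ‖z‖ ≤ 1 - R := by
    have := norm_add_le (z - x) (x : ℂ)
    rw [sub_add_cancel, hnx] at this
    linarith
  have hv0 : R ≤ ‖1 - (starRingEnd ℂ) (x : ℂ) * z‖ := by
    have := qp_one_sub' (x : ℂ) z (by rw [hnx]; linarith)
    linarith
  have hv1 : ‖1 - (starRingEnd ℂ) (x : ℂ) * z‖ ≤ 5 * R := by
    have e : 1 - (starRingEnd ℂ) (x : ℂ) * z = ((1 - x ^ 2 : ℝ) : ℂ) - x * (z - x) := by
      rw [Complex.conj_ofReal]; push_cast; ring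
    rw [e]
    refine (norm_sub_le _ _).trans ?_
    rw [norm_mul, hnx, Complex.norm_real, Real.norm_of_nonneg (by nlinarith)]
    have : x * ‖z - x‖ ≤ 1 * R := by gcongr; linarith
    nlinarith
  rw [qp_sigma _ _ (by rw [← norm_pos_iff]; linarith), hnx,
    le_div_iff₀ (pow_pos (hR.trans_le hv0) 2)]
  have h1 : ‖1 - (starRingEnd ℂ) (x : ℂ) * z‖ ^ 2 ≤ (5 * R) ^ 2 := by gcongr
  have h2 : 2 * R ≤ 1 - x ^ 2 := by rw [hx]; nlinarith
  have h3 : R ≤ 1 - ‖z‖ ^ 2 := by nlinarith [norm_nonneg z]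
  have h4 : 2 * R * R ≤ (1 - x ^ 2) * (1 - ‖z‖ ^ 2) := by gcongr; nlinarith
  nlinarith

theorem qp_forward (p : ℝ) (hp : 0 < p) (a : ℕ → ℝ)
    (hmono : Antitone a) (hpos : ∀ n, 0 ≤ a n)
    (h : MemQp p (fun z : ℂ => ∑' n : ℕ, (a n : ℂ) * z ^ n)) :
    ∃ C : ℝ, ∀ n : ℕ, (n : ℝ) * a n ≤ C := by
  obtain ⟨hd, C, hC⟩ := h
  obtain ⟨-, hs⟩ := qp_hasSum a hmono hpos
  set f : ℂ → ℂ := fun z : ℂ => ∑' n : ℕ, (a n : ℂ) * z ^ n with hf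
  set κ : ℝ := (2 / 25) ^ p with hκ
  have hκ0 : 0 < κ := by positivity
  set M : ℝ := κ⁻¹ * max C 0 with hM
  have hM0 : 0 ≤ M := by positivity
  refine ⟨1 + 256 * M, fun N => ?_⟩
  rcases Nat.eq_zero_or_pos N with rfl | hN
  · simp; linarith
  have hN' : (1 : ℝ) ≤ N := by exact_mod_cast hN
  have hN0 : (0 : ℝ) < N := by linarith
  set R : ℝ := 1 / (4 * N) with hR
  set x : ℝ := 1 - 2 * R with hx
  have hR0 : 0 < R := by positivity
  have hR4 : R ≤ 1 / 4 := by rw [hR]; gcongr; linarith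
  have hx0 : 0 ≤ x := by linarith
  have hnx : ‖(x : ℂ)‖ = x := by rw [Complex.norm_real, Real.norm_of_nonneg hx0]
  have hsub : ball (x : ℂ) R ⊆ ball 0 1 := by
    apply ball_subset_ball'
    rw [dist_zero_right, hnx]; linarith
  -- mean value
  have hdd : DifferentiableOn ℂ (deriv f) (ball 0 1) := hd.deriv isOpen_ball
  have mv := qp_mean (fun w => (deriv f (x + w)) ^ 2)
    (((measurable_deriv f).comp (measurable_const_add (x : ℂ))).pow_const 2) R (by
      refine DifferentiableOn.pow ?_ 2
      refine hdd.comp (by fun_prop) ?_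
      intro w hw
      apply hsub
      simpa using hw)
  have tr := (measurePreserving_add_left volume (x : ℂ)).setLIntegral_comp_preimage_emb
      (measurableEmbedding_addLeft (x : ℂ)) (fun w => ‖(deriv f w) ^ 2‖ₑ) (ball (x : ℂ) R)
  have hpre : (fun w : ℂ => (x : ℂ) + w) ⁻¹' (ball (x : ℂ) R) = ball 0 R := by
    ext w; simp
  rw [hpre] at tr
  rw [tr, add_zero] at mv
  have up : ∫⁻ z in ball (x : ℂ) R, ‖(deriv f z) ^ 2‖ₑ ≤ ENNReal.ofReal M := by
    have hxb : (x : ℂ) ∈ ball (0 : ℂ) 1 := by rw [mem_ball_zero_iff, hnx]; linarith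
    calc _ ≤ ∫⁻ z in ball (x : ℂ) R, ENNReal.ofReal κ⁻¹ * ENNReal.ofReal (‖deriv f z‖ ^ 2 *
            (1 - ‖((x : ℂ) - z) / (1 - (starRingEnd ℂ) (x : ℂ) * z)‖ ^ 2) ^ p) := by
          refine setLIntegral_mono' measurableSet_ball fun z hz => ?_
          have hw := qp_weight x R hR0 hR4 hx z hz
          rw [← ENNReal.ofReal_mul (by positivity), ← ofReal_norm, norm_pow]
          apply ENNReal.ofReal_le_ofReal
          have : κ ≤ (1 - ‖((x : ℂ) - z) / (1 - (starRingEnd ℂ) (x : ℂ) * z)‖ ^ 2) ^ p := by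
            rw [hκ]; gcongr
          calc ‖deriv f z‖ ^ 2 = κ⁻¹ * (‖deriv f z‖ ^ 2 * κ) := by field_simp
            _ ≤ _ := by gcongr
      _ = ENNReal.ofReal κ⁻¹ * ∫⁻ z in ball (x : ℂ) R, ENNReal.ofReal (‖deriv f z‖ ^ 2 *
            (1 - ‖((x : ℂ) - z) / (1 - (starRingEnd ℂ) (x : ℂ) * z)‖ ^ 2) ^ p) :=
          lintegral_const_mul' _ _ ENNReal.ofReal_ne_top
      _ ≤ ENNReal.ofReal κ⁻¹ * ENNReal.ofReal C := by
          gcongr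
          exact (lintegral_mono_set hsub).trans (hC _ hxb)
      _ ≤ ENNReal.ofReal M := by
          rw [← ENNReal.ofReal_mul (by positivity)]
          apply ENNReal.ofReal_le_ofReal
          rw [hM]; gcongr; exact le_max_left _ _
  have mv2 := mv.trans up
  have hvol : volume (ball (0 : ℂ) R) = ENNReal.ofReal (R ^ 2 * Real.pi) := by
    rw [Complex.volume_ball, ENNReal.ofReal_mul (by positivity), ENNReal.ofReal_pow hR0.le]
    congr 1
    rw [ENNReal.ofReal, ← NNReal.coe_real_pi, Real.toNNReal_coe]
  rw [hvol, ← ofReal_norm, norm_pow, ← ENNReal.ofReal_mul (by positivity),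
    ENNReal.ofReal_le_ofReal_iff hM0] at mv2
  -- lower bound for the derivative
  have hsx := hs x (by rw [hnx]; linarith)
  have hre : HasSum (fun n : ℕ => (n : ℝ) * a n * x ^ (n - 1)) (deriv f x).re := by
    have := Complex.hasSum_re hsx
    convert this using 2 with n
    rw [← Complex.ofReal_pow, ← Complex.ofReal_mul, Complex.ofReal_re]
  have hlow : (N : ℝ) ^ 2 * a N / 4 ≤ ‖deriv f x‖ := by
    refine le_trans ?_ ((Complex.re_le_norm _).trans le_rfl)
    have h1 := sum_le_hasSum (Finset.range (N + 1)) (fun n _ => by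
      have := hpos n; positivity) hre
    refine le_trans ?_ h1
    have hxN : 1 / 2 ≤ x ^ N := by
      have := one_add_mul_le_pow (a := -(2 * R)) (by linarith) N
      have e : 1 + (N : ℝ) * (-(2 * R)) = 1 / 2 := by rw [hR]; field_simp; norm_num
      rw [e] at this
      rw [hx]; simpa [sub_eq_add_neg] using this
    have h2 : ∑ n ∈ Finset.range (N + 1), (n : ℝ) * (a N / 2) ≤
        ∑ n ∈ Finset.range (N + 1), (n : ℝ) * a n * x ^ (n - 1) := by
      refine Finset.sum_le_sum fun n hn => ?_
      have hn' : n ≤ N := by simpa [Nat.lt_succ_iff] using hn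
      have hxn : 1 / 2 ≤ x ^ (n - 1) :=
        hxN.trans (pow_le_pow_of_le_one hx0 (by linarith) (by omega))
      have := hmono hn'
      have := hpos n
      have := hpos N
      rw [mul_assoc]
      have : a N * (1 / 2) ≤ a n * x ^ (n - 1) := by gcongr
      gcongr
      linarith
    refine le_trans ?_ h2
    rw [← Finset.sum_mul]
    have h3 : (N : ℝ) ^ 2 / 2 ≤ ∑ n ∈ Finset.range (N + 1), (n : ℝ) := by
      have := Finset.sum_range_id_mul_two (N + 1)
      have h4 : (∑ n ∈ Finset.range (N + 1), (n : ℝ)) * 2 = (N + 1) * N := by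
        rw [Nat.add_sub_cancel] at this
        have h5 := congrArg (Nat.cast : ℕ → ℝ) this
        push_cast at h5
        exact h5
      nlinarith
    have := hpos N
    calc (N : ℝ) ^ 2 * a N / 4 = (N : ℝ) ^ 2 / 2 * (a N / 2) := by ring
      _ ≤ _ := by gcongr
  have haN := hpos N
  have hfin : ((N : ℝ) * a N) ^ 2 / 256 ≤ M := by
    calc ((N : ℝ) * a N) ^ 2 / 256 = R ^ 2 * 1 * ((N : ℝ) ^ 2 * a N / 4) ^ 2 := by
          rw [hR]; field_simp; norm_num
      _ ≤ R ^ 2 * Real.pi * ‖deriv f x‖ ^ 2 := by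
          have : 1 ≤ Real.pi := by linarith [Real.pi_gt_three]
          gcongr
      _ ≤ M := mv2
  nlinarith [sq_nonneg ((N : ℝ) * a N - 1)]

theorem qp_backward (p : ℝ) (hp : 0 < p) (a : ℕ → ℝ)
    (hmono : Antitone a) (hpos : ∀ n, 0 ≤ a n)
    (C : ℝ) (hC : ∀ n : ℕ, (n : ℝ) * a n ≤ C) :
    MemQp p (fun z : ℂ => ∑' n : ℕ, (a n : ℂ) * z ^ n) := by
  refine ⟨(qp_hasSum a hmono hpos).1, ?_⟩
  have hC0 : 0 ≤ C := by simpa using hC 0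
  set q : ℝ := min p 1 with hq
  have hq0 : 0 < q := lt_min hp one_pos
  have hq1 : q ≤ 1 := min_le_right _ _
  have hqp : q ≤ p := min_le_left _ _
  have hpt := qp_pointwise a hmono hpos C hC (q / 4) (by linarith) (by linarith)
  set f : ℂ → ℂ := fun z : ℂ => ∑' n : ℕ, (a n : ℂ) * z ^ n with hf
  set D : ℝ := 6 * C + 2 * C / (q / 4) with hD
  have hD0 : 0 ≤ D := by positivity
  set K := ∫⁻ z : ℂ, ENNReal.ofReal (qpPhi q ‖z‖) with hK
  have hKfin : K ≠ ⊤ := by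
    have := (qpPhi_integrable q hq0).lintegral_lt_top
    exact this.ne
  refine ⟨(ENNReal.ofReal (4 * D ^ 2) * (K + K)).toReal, fun b hb => ?_⟩
  rw [ENNReal.ofReal_toReal (ENNReal.mul_ne_top ENNReal.ofReal_ne_top
    (ENNReal.add_ne_top.2 ⟨hKfin, hKfin⟩))]
  rw [mem_ball_zero_iff] at hb
  set δ : ℝ := 1 - ‖b‖ with hδ
  have hδ0 : 0 < δ := by rw [hδ]; linarith
  have hmeas : ∀ c : ℂ, Measurable fun z : ℂ =>
      ENNReal.ofReal ((δ ^ 2)⁻¹ * qpPhi q (‖z - c‖ / δ)) := by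
    intro c
    refine Measurable.ennreal_ofReal (Measurable.const_mul ?_ _)
    exact (qpPhi_measurable q).comp (by fun_prop)
  have hpw : ∀ z ∈ ball (0 : ℂ) 1, z ≠ b →
      ENNReal.ofReal (‖deriv f z‖ ^ 2 *
            (1 - ‖(b - z) / (1 - (starRingEnd ℂ) b * z)‖ ^ 2) ^ p) ≤
      ENNReal.ofReal (4 * D ^ 2) * (ENNReal.ofReal ((δ ^ 2)⁻¹ * qpPhi q (‖z - 1‖ / δ)) +
        ENNReal.ofReal ((δ ^ 2)⁻¹ * qpPhi q (‖z - b‖ / δ))) := by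
    intro z hz hzb
    rw [mem_ball_zero_iff] at hz
    have hphi : ∀ c : ℂ, 0 ≤ (δ ^ 2)⁻¹ * qpPhi q (‖z - c‖ / δ) := fun c =>
      mul_nonneg (by positivity) (qpPhi_nonneg _ _ (by positivity))
    rw [← ENNReal.ofReal_add (hphi _) (hphi _), ← ENNReal.ofReal_mul (by positivity)]
    apply ENNReal.ofReal_le_ofReal
    have hf' := hpt z hz
    have hδv := qp_one_sub b z hz.le
    have htv := qp_one_sub' b z hb.le
    have hv0 : 0 < ‖1 - (starRingEnd ℂ) b * z‖ := by linarith
    have hsig := qp_sigma b z (norm_pos_iff.1 hv0)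
    have hsv : ‖z - b‖ ≤ ‖1 - (starRingEnd ℂ) b * z‖ := by
      have h0 : 0 ≤ 1 - ‖(b - z) / (1 - (starRingEnd ℂ) b * z)‖ ^ 2 := by
        rw [hsig]
        have h1 : 0 ≤ 1 - ‖b‖ ^ 2 := by nlinarith [norm_nonneg b]
        have h2 : 0 ≤ 1 - ‖z‖ ^ 2 := by nlinarith [norm_nonneg z]
        positivity
      have h1 : ‖(b - z) / (1 - (starRingEnd ℂ) b * z)‖ ≤ 1 := by
        rw [← sq_le_one_iff₀ (norm_nonneg _)]; linarith
      rw [norm_div, div_le_one hv0, norm_sub_rev] at h1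
      exact h1
    have htu : 1 - ‖z‖ ≤ ‖z - 1‖ := by
      have := norm_sub_norm_le (1 : ℂ) z
      rwa [norm_one, norm_sub_rev] at this
    rw [norm_sub_rev (1 : ℂ) z] at hf'
    have hw0 : 0 ≤ 1 - ‖(b - z) / (1 - (starRingEnd ℂ) b * z)‖ ^ 2 := by
      rw [hsig]
      have h1 : 0 ≤ 1 - ‖b‖ ^ 2 := by nlinarith [norm_nonneg b]
      have h2 : 0 ≤ 1 - ‖z‖ ^ 2 := by nlinarith [norm_nonneg z]
      positivity
    have hw1 : 1 - ‖(b - z) / (1 - (starRingEnd ℂ) b * z)‖ ^ 2 ≤ 1 := by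
      linarith [sq_nonneg ‖(b - z) / (1 - (starRingEnd ℂ) b * z)‖]
    have hw2 : 1 - ‖(b - z) / (1 - (starRingEnd ℂ) b * z)‖ ^ 2 ≤
        4 * (δ * (1 - ‖z‖) / ‖1 - (starRingEnd ℂ) b * z‖ ^ 2) := by
      rw [hsig, ← mul_div_assoc]
      have h1 : 1 - ‖b‖ ^ 2 ≤ 2 * δ := by nlinarith [norm_nonneg b]
      have h2 : 1 - ‖z‖ ^ 2 ≤ 2 * (1 - ‖z‖) := by nlinarith [norm_nonneg z]
      have h3 : 0 ≤ 1 - ‖z‖ ^ 2 := by nlinarith [norm_nonneg z]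
      have h4 : (1 - ‖b‖ ^ 2) * (1 - ‖z‖ ^ 2) ≤ 2 * δ * (2 * (1 - ‖z‖)) := by gcongr
      exact div_le_div_of_nonneg_right (by linarith) (by positivity)
    generalize 1 - ‖(b - z) / (1 - (starRingEnd ℂ) b * z)‖ ^ 2 = w at *
    have hs0 : 0 < ‖z - b‖ := norm_pos_iff.2 (sub_ne_zero.2 hzb)
    generalize ‖1 - (starRingEnd ℂ) b * z‖ = v at *
    generalize ‖z - b‖ = s at *
    have ht0 : 0 < 1 - ‖z‖ := by linarith
    generalize 1 - ‖z‖ = t at *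
    generalize ‖z - 1‖ = u at *
    have hu0 : 0 < u := by linarith
    have key := qp_key q (t / δ) (u / δ) (v / δ) (s / δ) hq0 hq1 (by positivity) (by positivity)
      (by positivity) (by gcongr) (by gcongr) (by rwa [one_le_div hδ0]) (by gcongr)
    have e1 : u / δ / (t / δ) = u / t := by field_simp
    have e2 : t / δ / (v / δ) ^ 2 = δ * t / v ^ 2 := by field_simp
    rw [e1, e2] at key
    have hwp : w ^ p ≤ 4 * (δ * t / v ^ 2) ^ q := by
      calc w ^ p ≤ w ^ q := Real.rpow_le_rpow_of_exponent_ge_of_imp hw0 hw1 hqp (by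
            intro _ h; linarith)
        _ ≤ (4 * (δ * t / v ^ 2)) ^ q := by gcongr
        _ = 4 ^ q * (δ * t / v ^ 2) ^ q := by
            rw [Real.mul_rpow (by norm_num) (by positivity)]
        _ ≤ _ := by
            gcongr
            calc (4 : ℝ) ^ q ≤ 4 ^ (1 : ℝ) :=
                  Real.rpow_le_rpow_of_exponent_le (by norm_num) hq1
              _ = 4 := Real.rpow_one _
    calc ‖deriv f z‖ ^ 2 * w ^ p
        ≤ (D * (u⁻¹ * (u / t) ^ (q / 4))) ^ 2 * (4 * (δ * t / v ^ 2) ^ q) := by gcongr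
      _ = 4 * D ^ 2 * (δ ^ 2)⁻¹ * (((u / δ)⁻¹ * (u / t) ^ (q / 4)) ^ 2 * (δ * t / v ^ 2) ^ q) := by
          generalize (u / t) ^ (q / 4) = A
          generalize (δ * t / v ^ 2) ^ q = B
          field_simp
      _ ≤ 4 * D ^ 2 * (δ ^ 2)⁻¹ * (qpPhi q (u / δ) + qpPhi q (s / δ)) := by gcongr
      _ = _ := by ring
  calc _ ≤ ∫⁻ z in ball (0 : ℂ) 1, ENNReal.ofReal (4 * D ^ 2) *
        (ENNReal.ofReal ((δ ^ 2)⁻¹ * qpPhi q (‖z - 1‖ / δ)) +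
        ENNReal.ofReal ((δ ^ 2)⁻¹ * qpPhi q (‖z - b‖ / δ))) := by
        refine lintegral_mono_ae ?_
        filter_upwards [ae_restrict_mem measurableSet_ball,
          ae_restrict_of_ae (Measure.ae_ne volume b)] with z hz hzb
        exact hpw z hz hzb
    _ ≤ ∫⁻ z : ℂ, ENNReal.ofReal (4 * D ^ 2) *
        (ENNReal.ofReal ((δ ^ 2)⁻¹ * qpPhi q (‖z - 1‖ / δ)) +
        ENNReal.ofReal ((δ ^ 2)⁻¹ * qpPhi q (‖z - b‖ / δ))) := setLIntegral_le_lintegral _ _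
    _ = _ := by
        rw [lintegral_const_mul' _ _ ENNReal.ofReal_ne_top, lintegral_add_left (hmeas 1),
          qpPhi_scale q δ hδ0, qpPhi_scale q δ hδ0]

/-- For `0 < p < ∞` and `f(z) = ∑ aₙ zⁿ` with `(aₙ)` a nonincreasing sequence of
nonnegative reals, `f ∈ Q_p` iff `aₙ = O(1/n)`. -/
theorem statement11 (p : ℝ) (hp : 0 < p) (a : ℕ → ℝ)
    (hmono : Antitone a) (hpos : ∀ n, 0 ≤ a n) :
    MemQp p (fun z : ℂ => ∑' n : ℕ, (a n : ℂ) * z ^ n)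
      ↔ ∃ C : ℝ, ∀ n : ℕ, (n : ℝ) * a n ≤ C := by
  exact ⟨qp_forward p hp a hmono hpos, fun ⟨C, hC⟩ => qp_backward p hp a hmono hpos C hC⟩
end

section
/- Let μ be a positive Borel measure on [0,1) regarded as a measure on 𝔻. Then μ is a Hankel measure (i.e., |∫ f² dμ| ≤ C‖f‖²_{H²} for all f ∈ H²) if and only if μ[n] = O(1/n). -/
open MeasureTheory Complex Metric Real

/-- A positive Borel measure `μ` on `[0,1)`, viewed as a measure on the segment
`[0,1) ⊂ 𝔻`, is a Hankel measure: there is `C` with `|∫ f² dμ| ≤ C ‖f‖²_{H²}`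
for all `f ∈ H²`, phrased by testing against every bound `M` on `‖f‖²_{H²}`. -/
def IsHankelMeasureOnSegment (μ : Measure ℝ) : Prop :=
  ∃ C : ℝ, ∀ f : ℂ → ℂ, DifferentiableOn ℂ f (Metric.ball 0 1) →
    ∀ M : ℝ,
      (∀ r ∈ Set.Ioo (0 : ℝ) 1,
        (2 * π)⁻¹ * (∫ θ in (0 : ℝ)..(2 * π),
          ‖f ((r : ℂ) * Complex.exp (θ * Complex.I))‖ ^ 2) ≤ M) →
      ‖∫ t, f (t : ℂ) ^ 2 ∂μ‖ ≤ C * M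

lemma parseval_poly (c : ℕ → ℂ) (N : ℕ) :
    (2 * π)⁻¹ * (∫ θ in (0 : ℝ)..(2 * π),
      ‖∑ k ∈ Finset.range N, c k * Complex.exp (θ * Complex.I) ^ k‖ ^ 2)
      = ∑ k ∈ Finset.range N, ‖c k‖ ^ 2 := by
  have hpi : (π : ℝ) ≠ 0 := Real.pi_ne_zero
  have hexp : ∀ j k : ℕ, (∫ θ in (0 : ℝ)..(2 * π),
      Complex.exp ((((j : ℂ) - k) * Complex.I) * θ)) = if j = k then ((2 * π : ℝ) : ℂ) else 0 := by
    intro j k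
    split_ifs with h
    · subst h; simp
    · have h1 : ((j : ℂ) - k) * Complex.I ≠ 0 := by
        refine mul_ne_zero (sub_ne_zero.mpr ?_) Complex.I_ne_zero
        exact_mod_cast h
      rw [integral_exp_mul_complex h1]
      have h2 : Complex.exp (((j : ℂ) - k) * Complex.I * ((2 * π : ℝ) : ℂ)) = 1 := by
        rw [Complex.exp_eq_one_iff]
        refine ⟨(j : ℤ) - k, ?_⟩
        push_cast; ring
      rw [h2]; simp
  have hpt : ∀ θ : ℝ, ((‖∑ k ∈ Finset.range N, c k * Complex.exp (θ * Complex.I) ^ k‖ ^ 2 : ℝ) : ℂ)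
      = ∑ j ∈ Finset.range N, ∑ k ∈ Finset.range N,
        (c j * (starRingEnd ℂ) (c k)) * Complex.exp ((((j : ℂ) - k) * Complex.I) * θ) := by
    intro θ
    push_cast
    rw [← Complex.mul_conj', map_sum, Finset.sum_mul_sum]
    refine Finset.sum_congr rfl fun j _ => Finset.sum_congr rfl fun k _ => ?_
    rw [map_mul, map_pow, ← Complex.exp_conj, ← Complex.exp_nat_mul, ← Complex.exp_nat_mul]
    have : Complex.exp ((((j : ℂ) - k) * Complex.I) * θ) =
        Complex.exp (j * (θ * Complex.I)) * Complex.exp (k * (starRingEnd ℂ) (θ * Complex.I)) := by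
      rw [← Complex.exp_add]
      congr 1
      simp; ring
    rw [this]; ring
  have hint : ((∫ θ in (0 : ℝ)..(2 * π),
      ‖∑ k ∈ Finset.range N, c k * Complex.exp (θ * Complex.I) ^ k‖ ^ 2 : ℝ) : ℂ)
      = ((2 * π * ∑ k ∈ Finset.range N, ‖c k‖ ^ 2 : ℝ) : ℂ) := by
    rw [← intervalIntegral.integral_ofReal]
    simp_rw [hpt]
    rw [intervalIntegral.integral_finsetSum]
    · rw [Complex.ofReal_mul, Complex.ofReal_sum, Finset.mul_sum]
      refine Finset.sum_congr rfl fun j hj => ?_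
      rw [intervalIntegral.integral_finsetSum]
      · simp_rw [intervalIntegral.integral_const_mul, hexp]
        rw [Finset.sum_eq_single j]
        · rw [if_pos rfl, Complex.mul_conj']; push_cast; ring
        · intro k _ hk; rw [if_neg (Ne.symm hk), mul_zero]
        · intro h; exact absurd hj h
      · intro k _
        apply Continuous.intervalIntegrable
        fun_prop
    · intro k _
      apply Continuous.intervalIntegrable
      fun_prop
  have := Complex.ofReal_injective hint
  rw [this]; field_simp

lemma hilbert_ineq (a : ℕ → ℝ) (ha : ∀ n, 0 ≤ a n) (N : ℕ) :
    (∑ j ∈ Finset.range N, ∑ k ∈ Finset.range N, a j * a k / ((j : ℝ) + k + 1))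
      + (∑ j ∈ Finset.range N, a j) ^ 2 / N ≤ 4 * ∑ k ∈ Finset.range N, a k ^ 2 := by
  induction N with
  | zero => simp
  | succ N ih =>
    have hsplit : (∑ j ∈ Finset.range (N+1), ∑ k ∈ Finset.range (N+1),
          a j * a k / ((j : ℝ) + k + 1)) =
        (∑ j ∈ Finset.range N, ∑ k ∈ Finset.range N, a j * a k / ((j : ℝ) + k + 1))
        + 2 * (∑ j ∈ Finset.range N, a j * a N / ((j : ℝ) + N + 1))
        + a N * a N / ((N : ℝ) + N + 1) := by
      rw [Finset.sum_range_succ]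
      simp_rw [Finset.sum_range_succ _ N]
      rw [Finset.sum_add_distrib]
      have : ∀ k : ℕ, a N * a k / ((N : ℝ) + k + 1) = a k * a N / ((k : ℝ) + N + 1) := by
        intro k; rw [mul_comm (a N), add_comm (N : ℝ)]
      rw [Finset.sum_congr rfl (fun k _ => this k)]
      ring
    set s := ∑ j ∈ Finset.range N, a j with hs
    have h1 : (∑ j ∈ Finset.range N, a j * a N / ((j : ℝ) + N + 1)) ≤ s * a N / (N + 1) := by
      rw [hs, Finset.sum_mul, Finset.sum_div]
      refine Finset.sum_le_sum fun j _ => ?_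
      have := ha j
      have := ha N
      gcongr
      have : (0:ℝ) ≤ j := by positivity
      linarith
    have h2 : a N * a N / ((N : ℝ) + N + 1) ≤ 2 * (a N * a N / (N + 1)) := by
      have := ha N
      have : a N * a N / ((N : ℝ) + N + 1) ≤ a N * a N / (N + 1) := by
        gcongr
        have : (0:ℝ) ≤ N := by positivity
        linarith
      have : 0 ≤ a N * a N / ((N:ℝ) + 1) := by positivity
      linarith
    have h3 : 2 * (s * a N / (N + 1)) + 2 * (a N * a N / (N + 1)) + (s + a N) ^ 2 / (N + 1)
        ≤ s ^ 2 / N + 4 * a N ^ 2 := by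
      rcases Nat.eq_zero_or_pos N with h0 | h0
      · have : s = 0 := by rw [hs, h0]; simp
        rw [this, h0]; simp; nlinarith [sq_nonneg (a 0)]
      · have hN : (0:ℝ) < N := by exact_mod_cast h0
        have : s ^ 2 / N + 4 * a N ^ 2 - (2 * (s * a N / (N + 1)) + 2 * (a N * a N / (N + 1))
            + (s + a N) ^ 2 / (N + 1)) = ((2 * N * a N - s) ^ 2 + N * a N ^ 2) / (N * (N + 1)) := by
          field_simp; ring
        have h4 : 0 ≤ ((2 * N * a N - s) ^ 2 + N * a N ^ 2) / ((N:ℝ) * (N + 1)) := by positivity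
        linarith
    rw [hsplit, Finset.sum_range_succ, Finset.sum_range_succ, ← hs]
    push_cast
    linarith

lemma coeff_bound (f : ℂ → ℂ) (a : ℕ → ℂ)
    (hf : DifferentiableOn ℂ f (Metric.ball 0 1))
    (ha : ∀ z ∈ Metric.ball (0:ℂ) 1, HasSum (fun n => a n * z ^ n) (f z)) (M : ℝ)
    (hM : ∀ r ∈ Set.Ioo (0 : ℝ) 1,
        (2 * π)⁻¹ * (∫ θ in (0 : ℝ)..(2 * π),
          ‖f ((r : ℂ) * Complex.exp (θ * Complex.I))‖ ^ 2) ≤ M) (N : ℕ) :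
    ∑ k ∈ Finset.range N, ‖a k‖ ^ 2 ≤ M := by
  have key : ∀ r ∈ Set.Ioo (0:ℝ) 1, ∑ k ∈ Finset.range N, ‖a k * (r:ℂ) ^ k‖ ^ 2 ≤ M := by
    intro r hr
    have hmem : ∀ θ : ℝ, (r : ℂ) * Complex.exp (θ * Complex.I) ∈ Metric.ball (0:ℂ) 1 := by
      intro θ
      simp [Complex.norm_exp_ofReal_mul_I, abs_of_pos hr.1, hr.2]
    have hsum : Summable (fun n => ‖a n * (r:ℂ) ^ n‖) := by
      have : (r:ℂ) ∈ Metric.ball (0:ℂ) 1 := by simp [abs_of_pos hr.1, hr.2]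
      exact (ha _ this).summable.norm
    refine le_trans ?_ (hM r hr)
    have htend : Filter.Tendsto (fun n : ℕ => (2 * π)⁻¹ * (∫ θ in (0 : ℝ)..(2 * π),
        ‖∑ k ∈ Finset.range n, (a k * (r:ℂ) ^ k) * Complex.exp (θ * Complex.I) ^ k‖ ^ 2))
        Filter.atTop (nhds ((2 * π)⁻¹ * (∫ θ in (0 : ℝ)..(2 * π),
          ‖f ((r : ℂ) * Complex.exp (θ * Complex.I))‖ ^ 2))) := by
      refine Filter.Tendsto.const_mul _ ?_
      refine intervalIntegral.tendsto_integral_filter_of_dominated_convergence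
        (fun _ => (∑' n, ‖a n * (r:ℂ) ^ n‖) ^ 2) ?_ ?_ ?_ ?_
      · refine Filter.Eventually.of_forall fun n => ?_
        apply Continuous.aestronglyMeasurable
        fun_prop
      · refine Filter.Eventually.of_forall fun n => Filter.Eventually.of_forall fun θ _ => ?_
        rw [Real.norm_of_nonneg (by positivity)]
        gcongr
        refine (norm_sum_le _ _).trans ?_
        refine le_trans (le_of_eq ?_) (hsum.sum_le_tsum (Finset.range n) (fun _ _ => norm_nonneg _))
        refine Finset.sum_congr rfl fun k _ => ?_
        rw [norm_mul, norm_pow (Complex.exp _), Complex.norm_exp_ofReal_mul_I, one_pow, mul_one]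
      · exact intervalIntegrable_const
      · refine Filter.Eventually.of_forall fun θ _ => ?_
        have := (ha _ (hmem θ)).tendsto_sum_nat
        refine (this.norm.pow 2).congr fun n => ?_
        congr 2
        refine Finset.sum_congr rfl fun k _ => ?_
        rw [mul_pow, mul_assoc]
    refine ge_of_tendsto htend ?_
    filter_upwards [Filter.eventually_ge_atTop N] with n hn
    rw [parseval_poly]
    exact Finset.sum_le_sum_of_subset_of_nonneg (Finset.range_mono hn) (fun _ _ _ => by positivity)
  have hcont : Filter.Tendsto (fun r : ℝ => ∑ k ∈ Finset.range N, ‖a k * (r:ℂ) ^ k‖ ^ 2)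
      (nhdsWithin 1 (Set.Iio 1)) (nhds (∑ k ∈ Finset.range N, ‖a k * ((1:ℝ):ℂ) ^ k‖ ^ 2)) := by
    refine Filter.Tendsto.mono_left ?_ nhdsWithin_le_nhds
    apply Continuous.tendsto
    fun_prop
  have := le_of_tendsto hcont (b := M) (by
    filter_upwards [Ioo_mem_nhdsLT (show (0:ℝ) < 1 by norm_num)] with r hr using key r hr)
  simpa using this

lemma integrable_pow_seg (μ : Measure ℝ) [IsFiniteMeasure μ]
    (hsupp : ∀ᵐ t ∂μ, t ∈ Set.Ico (0 : ℝ) 1) (n : ℕ) : Integrable (fun t : ℝ => t ^ n) μ := by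
  refine Integrable.of_bound (C := 1) (by fun_prop) ?_
  filter_upwards [hsupp] with t ht
  rw [norm_pow, Real.norm_of_nonneg ht.1]
  exact pow_le_one₀ ht.1 ht.2.le

lemma forward_dir (μ : Measure ℝ) [IsFiniteMeasure μ]
    (hsupp : ∀ᵐ t ∂μ, t ∈ Set.Ico (0 : ℝ) 1) (h : IsHankelMeasureOnSegment μ) :
    ∃ C : ℝ, ∀ n : ℕ, (n : ℝ) * ∫ t, t ^ n ∂μ ≤ C := by
  obtain ⟨C, hC⟩ := h
  have hI := integrable_pow_seg μ hsupp
  have hmono : ∀ m n : ℕ, m ≤ n → ∫ t, t ^ n ∂μ ≤ ∫ t, t ^ m ∂μ := by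
    intro m n hmn
    refine integral_mono_ae (hI n) (hI m) ?_
    filter_upwards [hsupp] with t ht
    exact pow_le_pow_of_le_one ht.1 ht.2.le hmn
  have heven : ∀ N : ℕ, (N : ℝ) * ∫ t, t ^ (2 * N) ∂μ ≤ |C| := by
    intro N
    rcases Nat.eq_zero_or_pos N with h0 | h0
    · subst h0; simp
    have hN : (0:ℝ) < N := by exact_mod_cast h0
    have h1 := hC (fun z => ∑ k ∈ Finset.range N, z ^ k)
      (by apply Differentiable.differentiableOn; fun_prop) N (by
        intro r hr
        have := parseval_poly (fun k => (r:ℂ) ^ k) N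
        simp_rw [← mul_pow] at this
        rw [this]
        refine (Finset.sum_le_sum (g := fun _ => (1:ℝ)) fun k _ => ?_).trans (by simp)
        rw [norm_pow, Complex.norm_of_nonneg hr.1.le]
        exact pow_le_one₀ (by have := hr.1; positivity) (pow_le_one₀ hr.1.le hr.2.le))
    have h2 : (∫ t : ℝ, (∑ k ∈ Finset.range N, (t:ℂ) ^ k) ^ 2 ∂μ)
        = ((∫ t : ℝ, (∑ k ∈ Finset.range N, t ^ k) ^ 2 ∂μ : ℝ) : ℂ) := by
      rw [← integral_complex_ofReal]
      push_cast
      rfl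
    have h3 : (N:ℝ) ^ 2 * ∫ t, t ^ (2 * N) ∂μ ≤ ∫ t : ℝ, (∑ k ∈ Finset.range N, t ^ k) ^ 2 ∂μ := by
      rw [← integral_const_mul]
      refine integral_mono_ae ((hI _).const_mul _) ?_ ?_
      · refine Integrable.of_bound (C := (N:ℝ) ^ 2) (by fun_prop) ?_
        filter_upwards [hsupp] with t ht
        have : 0 ≤ ∑ k ∈ Finset.range N, t ^ k := Finset.sum_nonneg fun k _ => pow_nonneg ht.1 k
        rw [Real.norm_of_nonneg (by positivity)]
        gcongr
        refine (Finset.sum_le_sum (g := fun _ => (1:ℝ)) fun k _ => ?_).trans (by simp)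
        exact pow_le_one₀ ht.1 ht.2.le
      · filter_upwards [hsupp] with t ht
        have h5 : (N:ℝ) * t ^ N ≤ ∑ k ∈ Finset.range N, t ^ k := by
          have : ∑ k ∈ Finset.range N, t ^ N ≤ ∑ k ∈ Finset.range N, t ^ k :=
            Finset.sum_le_sum fun k hk =>
              pow_le_pow_of_le_one ht.1 ht.2.le (Finset.mem_range.mp hk).le
          simpa using this
        have h6 : 0 ≤ (N:ℝ) * t ^ N := mul_nonneg hN.le (pow_nonneg ht.1 _)
        calc (N:ℝ) ^ 2 * t ^ (2 * N) = (N * t ^ N) ^ 2 := by ring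
          _ ≤ _ := by gcongr
    rw [h2, Complex.norm_real] at h1
    have h4 := (h3.trans (le_abs_self _)).trans h1
    have h5 : (N:ℝ) * ∫ t, t ^ (2 * N) ∂μ ≤ C := by
      refine le_of_mul_le_mul_left ?_ hN
      linarith [h4]
    exact h5.trans (le_abs_self C)
  refine ⟨2 * |C| + ∫ t, t ^ 0 ∂μ, fun n => ?_⟩
  have hn : n = 2 * (n / 2) + n % 2 := by omega
  have h1 := heven (n / 2)
  have h2 := hmono (2 * (n/2)) n (by omega)
  have h3 := hmono 0 (2 * (n/2)) (by omega)
  have h4 : (n:ℝ) ≤ 2 * ((n/2 : ℕ):ℝ) + 1 := by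
    have : n ≤ 2 * (n / 2) + 1 := by omega
    exact_mod_cast this
  have h5 : 0 ≤ ∫ t, t ^ (2 * (n/2)) ∂μ := by
    refine integral_nonneg_of_ae ?_
    filter_upwards [hsupp] with t ht using pow_nonneg ht.1 _
  calc (n:ℝ) * ∫ t, t ^ n ∂μ ≤ n * ∫ t, t ^ (2 * (n/2)) ∂μ := by gcongr
    _ ≤ (2 * ((n/2 : ℕ):ℝ) + 1) * ∫ t, t ^ (2 * (n/2)) ∂μ := by gcongr
    _ ≤ _ := by linarith

lemma backward_dir (μ : Measure ℝ) [IsFiniteMeasure μ]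
    (hsupp : ∀ᵐ t ∂μ, t ∈ Set.Ico (0 : ℝ) 1)
    (h : ∃ C : ℝ, ∀ n : ℕ, (n : ℝ) * ∫ t, t ^ n ∂μ ≤ C) : IsHankelMeasureOnSegment μ := by
  obtain ⟨C, hC⟩ := h
  have hI := integrable_pow_seg μ hsupp
  have hC0 : 0 ≤ C := by simpa using hC 0
  set D := C + ∫ t, t ^ 0 ∂μ with hD
  have hm0 : 0 ≤ ∫ t, t ^ 0 ∂μ := integral_nonneg fun t => by simp
  have hD0 : 0 ≤ D := by positivity
  have hmom : ∀ n : ℕ, ∫ t, t ^ n ∂μ ≤ D / (n + 1) := by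
    intro n
    rw [le_div_iff₀ (by positivity)]
    have : ∫ t, t ^ n ∂μ ≤ ∫ t, t ^ 0 ∂μ := by
      refine integral_mono_ae (hI n) (hI 0) ?_
      filter_upwards [hsupp] with t ht
      exact pow_le_pow_of_le_one ht.1 ht.2.le (Nat.zero_le n)
    linarith [hC n]
  refine ⟨4 * D, fun f hf M hM => ?_⟩
  let a : ℕ → ℂ := fun n => (n.factorial : ℂ)⁻¹ * iteratedDeriv n f 0
  have ha : ∀ z ∈ Metric.ball (0:ℂ) 1, HasSum (fun n => a n * z ^ n) (f z) := by
    intro z hz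
    have := Complex.hasSum_taylorSeries_on_ball (c := 0) (r := 1) (f := f) (by simpa using hf)
      (z := z) (by simpa using hz)
    have he : (fun n => a n * z ^ n) =
        fun n : ℕ => (n.factorial : ℂ)⁻¹ • (z - 0) ^ n • iteratedDeriv n f 0 := by
      funext n
      simp only [a, smul_eq_mul, sub_zero]; ring
    rw [he]; exact this
  have hco := coeff_bound f a hf ha M hM
  have hM0 : 0 ≤ M := by simpa using hco 0
  have hfin : ∀ N : ℕ, ∫⁻ t : ℝ, ENNReal.ofReal ‖(∑ k ∈ Finset.range N, a k * (t:ℂ) ^ k) ^ 2‖ ∂μ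
      ≤ ENNReal.ofReal (4 * D * M) := by
    intro N
    have hexpand : ∀ t : ℝ, (∑ k ∈ Finset.range N, ‖a k‖ * t ^ k) ^ 2 =
        ∑ j ∈ Finset.range N, ∑ k ∈ Finset.range N, (‖a j‖ * ‖a k‖) * t ^ (j + k) := by
      intro t
      rw [sq, Finset.sum_mul_sum]
      refine Finset.sum_congr rfl fun j _ => Finset.sum_congr rfl fun k _ => ?_
      rw [pow_add]; ring
    have hi1 : ∀ j k : ℕ, Integrable (fun t : ℝ => (‖a j‖ * ‖a k‖) * t ^ (j + k)) μ :=
      fun j k => (hI _).const_mul _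
    have hi2 : Integrable (fun t : ℝ => (∑ k ∈ Finset.range N, ‖a k‖ * t ^ k) ^ 2) μ := by
      simp_rw [hexpand]
      exact integrable_finsetSum _ fun j _ => integrable_finsetSum _ fun k _ => hi1 j k
    have hle : ∫ t : ℝ, (∑ k ∈ Finset.range N, ‖a k‖ * t ^ k) ^ 2 ∂μ ≤ 4 * D * M := by
      simp_rw [hexpand]
      rw [integral_finsetSum _ fun j _ => integrable_finsetSum _ fun k _ => hi1 j k]
      simp_rw [integral_finsetSum _ fun k _ => hi1 _ k, integral_const_mul]
      have h1 := hilbert_ineq (fun n => ‖a n‖) (fun _ => norm_nonneg _) N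
      have h2 : 0 ≤ (∑ j ∈ Finset.range N, ‖a j‖) ^ 2 / (N:ℝ) := by positivity
      calc _ ≤ ∑ j ∈ Finset.range N, ∑ k ∈ Finset.range N,
            D * (‖a j‖ * ‖a k‖ / ((j:ℝ) + k + 1)) := by
            refine Finset.sum_le_sum fun j _ => Finset.sum_le_sum fun k _ => ?_
            have := hmom (j + k)
            push_cast at this
            calc _ ≤ ‖a j‖ * ‖a k‖ * (D / ((j:ℝ) + k + 1)) := by gcongr
              _ = _ := by ring
        _ = D * ∑ j ∈ Finset.range N, ∑ k ∈ Finset.range N,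
            (‖a j‖ * ‖a k‖ / ((j:ℝ) + k + 1)) := by simp_rw [Finset.mul_sum]
        _ ≤ D * (4 * M) := by
            gcongr
            linarith [hco N]
        _ = _ := by ring
    calc _ ≤ ∫⁻ t : ℝ, ENNReal.ofReal ((∑ k ∈ Finset.range N, ‖a k‖ * t ^ k) ^ 2) ∂μ := by
          refine lintegral_mono_ae ?_
          filter_upwards [hsupp] with t ht
          refine ENNReal.ofReal_le_ofReal ?_
          rw [norm_pow]
          gcongr
          refine (norm_sum_le _ _).trans (le_of_eq ?_)
          refine Finset.sum_congr rfl fun k _ => ?_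
          rw [norm_mul, norm_pow, Complex.norm_of_nonneg ht.1]
      _ = ENNReal.ofReal (∫ t : ℝ, (∑ k ∈ Finset.range N, ‖a k‖ * t ^ k) ^ 2 ∂μ) := by
          rw [ofReal_integral_eq_lintegral_ofReal hi2]
          exact Filter.Eventually.of_forall fun t => by positivity
      _ ≤ _ := ENNReal.ofReal_le_ofReal hle
  have hfatou : ∫⁻ t : ℝ, ENNReal.ofReal ‖f (t:ℂ) ^ 2‖ ∂μ ≤ ENNReal.ofReal (4 * D * M) := by
    calc _ = ∫⁻ t : ℝ, Filter.liminf (fun N : ℕ =>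
          ENNReal.ofReal ‖(∑ k ∈ Finset.range N, a k * (t:ℂ) ^ k) ^ 2‖) Filter.atTop ∂μ := by
          refine lintegral_congr_ae ?_
          filter_upwards [hsupp] with t ht
          have hz : (t:ℂ) ∈ Metric.ball (0:ℂ) 1 := by
            simp [abs_of_nonneg ht.1, ht.2]
          have := (ha _ hz).tendsto_sum_nat
          exact (ENNReal.tendsto_ofReal (this.pow 2).norm).liminf_eq.symm
      _ ≤ Filter.liminf (fun N : ℕ => ∫⁻ t : ℝ,
          ENNReal.ofReal ‖(∑ k ∈ Finset.range N, a k * (t:ℂ) ^ k) ^ 2‖ ∂μ) Filter.atTop := by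
          refine lintegral_liminf_le fun N => ?_
          apply Measurable.ennreal_ofReal
          apply Continuous.measurable
          fun_prop
      _ ≤ _ := by
          refine Filter.liminf_le_of_le (by isBoundedDefault) fun b hb => ?_
          obtain ⟨N, hN⟩ := hb.exists
          exact hN.trans (hfin N)
  calc _ ≤ (∫⁻ t : ℝ, ENNReal.ofReal ‖f (t:ℂ) ^ 2‖ ∂μ).toReal := norm_integral_le_lintegral_norm _
    _ ≤ 4 * D * M := ENNReal.toReal_le_of_le_ofReal (by positivity) hfatou

/-- A positive finite Borel measure `μ` on `[0,1)` (regarded as a measure on `𝔻`)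
is a Hankel measure iff `μ[n] = O(1/n)`. -/
theorem statement15 (μ : Measure ℝ) [IsFiniteMeasure μ]
    (hsupp : ∀ᵐ t ∂μ, t ∈ Set.Ico (0 : ℝ) 1) :
    IsHankelMeasureOnSegment μ ↔ ∃ C : ℝ, ∀ n : ℕ, (n : ℝ) * ∫ t, t ^ n ∂μ ≤ C := by
  exact ⟨forward_dir μ hsupp, backward_dir μ hsupp⟩
end
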